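/- arXiv:2506.18473 — 8 statements merged into one kernel-verified Lean document; each statement's English description precedes it below -/
import Mathlib

section
/- Let ABCDE be a strictly convex equilateral pentagon in the Euclidean plane with interior angles α, β, γ, δ, ε at A, B, C, D, E respectively. If 2α + β = 2π and 2δ + γ = 2π (pentagon type 8 conditions), then β + ε = π. -/
/-!
If `P` and `S` lie on the same side of the line `QR`, then the angle from `QP` to `RS` is
determined by the angles at `Q` and `R`, so the law of cosines extends to the three-sided path
`P Q R S`. Convexity enters only through this formula, which computes a diagonal of the pentagon
from three sides; the isosceles triangle on the other two sides gives the same diagonal.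

Put `u = cos (β / 2)` and `v = cos (γ / 2)`, both nonnegative. The angle conditions say
`cos α = -u`, `cos δ = -v`, `cos (α + β) = cos α` and `cos (γ + δ) = cos δ`. The two values of
`CE` give `2 * v = 3 - 4 * u ^ 2`, those of `EB` give `2 * u = 3 - 4 * v ^ 2`. Subtracting, either
`u = v` or `u + v = 1 / 2`, and the latter forces `u ≥ 1`; so `β = γ`. The two values of `AD` then
give `cos ε = -cos β`.
-/

open EuclideanGeometry

/-- Signed area determinant of two plane vectors. -/
noncomputable def det2 (u v : EuclideanSpace ℝ (Fin 2)) : ℝ :=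
  u 0 * v 1 - u 1 * v 0

/-- `R` lies strictly to the left of the directed line from `P` to `Q`. -/
def SLeft (P Q R : EuclideanSpace ℝ (Fin 2)) : Prop :=
  0 < det2 (Q - P) (R - P)

/-- The five points are in strictly convex position, listed in counterclockwise
cyclic order along their convex hull (in particular no three are collinear):
for every directed edge of the pentagon, all remaining vertices lie strictly to its left. -/
def CcwConvex5 (A B C D E : EuclideanSpace ℝ (Fin 2)) : Prop :=
  SLeft A B C ∧ SLeft A B D ∧ SLeft A B E ∧
  SLeft B C D ∧ SLeft B C E ∧ SLeft B C A ∧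
  SLeft C D E ∧ SLeft C D A ∧ SLeft C D B ∧
  SLeft D E A ∧ SLeft D E B ∧ SLeft D E C ∧
  SLeft E A B ∧ SLeft E A C ∧ SLeft E A D

/-- The five points are in strictly convex position, listed in cyclic order
(either orientation) along their convex hull, with no three collinear. -/
def ConvexPos5 (A B C D E : EuclideanSpace ℝ (Fin 2)) : Prop :=
  CcwConvex5 A B C D E ∨ CcwConvex5 E D C B A

/-- The pentagon `ABCDE` is equilateral. -/
def Equilateral5 (A B C D E : EuclideanSpace ℝ (Fin 2)) : Prop :=
  dist A B = dist B C ∧ dist B C = dist C D ∧ dist C D = dist D E ∧ dist D E = dist E A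

section InnerProductSpace

variable {V : Type*} [NormedAddCommGroup V] [InnerProductSpace ℝ V]

lemma inner_self_mul_inner_sub_inner_mul_inner_smul_add_smul (u z : V) (s t a b : ℝ) :
    inner ℝ u u * inner ℝ (s • z + a • u) (t • z + b • u) -
        inner ℝ u (s • z + a • u) * inner ℝ u (t • z + b • u) =
      s * t * (inner ℝ u u * inner ℝ z z - inner ℝ u z * inner ℝ u z) := by
  simp only [inner_add_left, inner_add_right, real_inner_smul_left, real_inner_smul_right,
    real_inner_comm u z]
  ring

lemma sin_angle_smul_add_smul_mul_norm_mul_norm (u z : V) {s : ℝ} (hs : 0 ≤ s) (a : ℝ) :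
    Real.sin (InnerProductGeometry.angle u (s • z + a • u)) * (‖u‖ * ‖s • z + a • u‖) =
      s * (Real.sin (InnerProductGeometry.angle u z) * (‖u‖ * ‖z‖)) := by
  rw [InnerProductGeometry.sin_angle_mul_norm_mul_norm,
    InnerProductGeometry.sin_angle_mul_norm_mul_norm,
    inner_self_mul_inner_sub_inner_mul_inner_smul_add_smul,
    Real.sqrt_mul (mul_self_nonneg s), Real.sqrt_mul_self hs]

lemma sin_angle_mul_norm_mul_norm_sq (u z : V) :
    (Real.sin (InnerProductGeometry.angle u z) * (‖u‖ * ‖z‖)) ^ 2 =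
      inner ℝ u u * inner ℝ z z - inner ℝ u z * inner ℝ u z := by
  rw [InnerProductGeometry.sin_angle_mul_norm_mul_norm,
    Real.sq_sqrt (sub_nonneg.mpr (real_inner_mul_inner_self_le u z))]

lemma inner_eq_norm_mul_norm_mul_cos_angle_sub_angle {u x y : V} {a b : ℝ}
    (h : SameRay ℝ (x - a • u) (y - b • u)) :
    inner ℝ x y =
      ‖x‖ * ‖y‖ * Real.cos (InnerProductGeometry.angle u x - InnerProductGeometry.angle u y) := by
  obtain ⟨z, s, t, hs, ht, -, hx, hy⟩ := h.exists_eq_smul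
  rw [sub_eq_iff_eq_add] at hx hy
  rcases eq_or_ne u 0 with rfl | hu
  · simp only [hx, hy, smul_zero, add_zero, norm_smul, Real.norm_of_nonneg hs,
      Real.norm_of_nonneg ht, real_inner_smul_left, real_inner_smul_right,
      real_inner_self_eq_norm_sq, InnerProductGeometry.angle_zero_left, sub_self, Real.cos_zero]
    ring
  · have sin_x := sin_angle_smul_add_smul_mul_norm_mul_norm u z hs a
    have sin_y := sin_angle_smul_add_smul_mul_norm_mul_norm u z ht b
    have gram := inner_self_mul_inner_sub_inner_mul_inner_smul_add_smul u z s t a b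
    rw [← hx] at sin_x gram
    rw [← hy] at sin_y gram
    apply mul_left_cancel₀ (pow_ne_zero 2 (norm_ne_zero_iff.mpr hu))
    calc ‖u‖ ^ 2 * inner ℝ x y
        = inner ℝ u x * inner ℝ u y +
            s * (Real.sin (InnerProductGeometry.angle u z) * (‖u‖ * ‖z‖)) *
              (t * (Real.sin (InnerProductGeometry.angle u z) * (‖u‖ * ‖z‖))) := by
          rw [← real_inner_self_eq_norm_sq]
          linear_combination gram - s * t * sin_angle_mul_norm_mul_norm_sq u z
      _ = ‖u‖ ^ 2 * (‖x‖ * ‖y‖ *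
            Real.cos (InnerProductGeometry.angle u x - InnerProductGeometry.angle u y)) := by
          rw [← sin_x, ← sin_y, ← InnerProductGeometry.cos_angle_mul_norm_mul_norm u x,
            ← InnerProductGeometry.cos_angle_mul_norm_mul_norm u y, Real.cos_sub]
          ring

end InnerProductSpace

section EuclideanAffineSpace

variable {V P : Type*} [NormedAddCommGroup V] [InnerProductSpace ℝ V] [MetricSpace P]
  [NormedAddTorsor V P]

lemma inner_vsub_vsub_of_wSameSide {p q r s : P} (h : line[ℝ, q, r].WSameSide p s) :
    inner ℝ (p -ᵥ q) (s -ᵥ r) = -(dist p q * dist r s * Real.cos (∠ p q r + ∠ q r s)) := by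
  obtain ⟨p', hp', s', hs', hray⟩ := h
  obtain ⟨a, rfl⟩ := mem_affineSpan_pair_iff_exists_lineMap_eq.mp hp'
  obtain ⟨b, rfl⟩ := mem_affineSpan_pair_iff_exists_lineMap_eq.mp hs'
  have hp : p -ᵥ AffineMap.lineMap q r a = (p -ᵥ q) - a • (r -ᵥ q) := by
    rw [AffineMap.lineMap_apply, vsub_vadd_eq_vsub_sub]
  have hs : s -ᵥ AffineMap.lineMap q r b = (s -ᵥ r) - (b - 1) • (r -ᵥ q) := by
    rw [AffineMap.lineMap_apply, vsub_vadd_eq_vsub_sub, sub_smul, one_smul,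
      ← vsub_add_vsub_cancel s r q]
    abel
  rw [hp, hs] at hray
  have hq : InnerProductGeometry.angle (r -ᵥ q) (p -ᵥ q) = ∠ p q r :=
    InnerProductGeometry.angle_comm _ _
  have hr : InnerProductGeometry.angle (r -ᵥ q) (s -ᵥ r) = Real.pi - ∠ q r s := by
    rw [EuclideanGeometry.angle, ← InnerProductGeometry.angle_neg_left, neg_vsub_eq_vsub_rev]
  rw [inner_eq_norm_mul_norm_mul_cos_angle_sub_angle hray, hq, hr, ← dist_eq_norm_vsub,
    ← dist_eq_norm_vsub, dist_comm s r, ← mul_neg, ← Real.cos_sub_pi]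
  congr 2
  ring

lemma dist_sq_of_wSameSide {p q r s : P} (h : line[ℝ, q, r].WSameSide p s) :
    dist p s ^ 2 = dist p q ^ 2 + dist q r ^ 2 + dist r s ^ 2 -
      2 * dist p q * dist q r * Real.cos (∠ p q r) -
      2 * dist q r * dist r s * Real.cos (∠ q r s) +
      2 * dist p q * dist r s * Real.cos (∠ p q r + ∠ q r s) := by
  have hq : inner ℝ (p -ᵥ q) (r -ᵥ q) = dist p q * dist q r * Real.cos (∠ p q r) := by
    rw [dist_comm q r, dist_eq_norm_vsub V p, dist_eq_norm_vsub V r, mul_comm]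
    exact (InnerProductGeometry.cos_angle_mul_norm_mul_norm _ _).symm
  have hr : inner ℝ (r -ᵥ q) (s -ᵥ r) = -(dist q r * dist r s * Real.cos (∠ q r s)) := by
    rw [dist_comm r s, dist_eq_norm_vsub V q, dist_eq_norm_vsub V s, mul_comm,
      ← neg_vsub_eq_vsub_rev q r, inner_neg_left]
    exact congrArg Neg.neg (InnerProductGeometry.cos_angle_mul_norm_mul_norm _ _).symm
  have hps : p -ᵥ s = (p -ᵥ q) - ((r -ᵥ q) + (s -ᵥ r)) := by
    rw [add_comm, vsub_add_vsub_cancel, vsub_sub_vsub_cancel_right]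
  rw [dist_eq_norm_vsub V p s, hps, norm_sub_sq_real, norm_add_sq_real, inner_add_right, hq, hr,
    inner_vsub_vsub_of_wSameSide h, ← dist_eq_norm_vsub, ← dist_eq_norm_vsub, ← dist_eq_norm_vsub,
    dist_comm r q, dist_comm s r]
  ring

lemma two_mul_cos_angles_of_equilateral_pentagon {A B C D E : P} {l : ℝ} (hl : l ≠ 0)
    (hAB : dist A B = l) (hBC : dist B C = l) (hCD : dist C D = l) (hDE : dist D E = l)
    (hEA : dist E A = l) (h : line[ℝ, B, C].WSameSide A D) :
    2 * Real.cos (∠ A B C) + 2 * Real.cos (∠ B C D) - 2 * Real.cos (∠ A B C + ∠ B C D) =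
      1 + 2 * Real.cos (∠ D E A) := by
  have path := dist_sq_of_wSameSide h
  have triangle := law_cos D E A
  rw [hAB, hBC, hCD] at path
  rw [dist_comm D A, dist_comm A E, hDE, hEA] at triangle
  apply mul_left_cancel₀ (pow_ne_zero 2 hl)
  linear_combination path - triangle

end EuclideanAffineSpace

lemma det2_smul_eq_sub (u v w : EuclideanSpace ℝ (Fin 2)) :
    det2 u v • w = det2 u w • v - det2 v w • u := by
  ext i
  fin_cases i <;> simp [det2] <;> ring

lemma SLeft.wSameSide {P Q R S : EuclideanSpace ℝ (Fin 2)} (hR : SLeft P Q R)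
    (hS : SLeft P Q S) : line[ℝ, P, Q].WSameSide R S := by
  have hRS : R - P = (det2 (Q - P) (R - P) / det2 (Q - P) (S - P)) •
      (S - P - (det2 (S - P) (R - P) / det2 (Q - P) (R - P)) • (Q - P)) := by
    have hS0 := hS.ne'
    have hR0 := hR.ne'
    rw [← smul_right_inj hS0, det2_smul_eq_sub _ _ (R - P)]
    match_scalars <;> field_simp
  refine AffineSubspace.wSameSide_of_vsub_eq_smul (left_mem_affineSpan_pair ℝ P Q)
    (AffineMap.lineMap_mem_affineSpan_pair (det2 (S - P) (R - P) / det2 (Q - P) (R - P)) P Q)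
    hRS (c₂ := 1) ?_ ?_
  · rw [AffineMap.lineMap_apply, vsub_vadd_eq_vsub_sub, vsub_eq_sub, vsub_eq_sub, one_smul]
  · rw [mul_one]
    exact (div_pos hR hS).le

namespace ConvexPos5

variable {A B C D E : EuclideanSpace ℝ (Fin 2)}

lemma rotate (h : ConvexPos5 A B C D E) : ConvexPos5 B C D E A := by
  unfold ConvexPos5 CcwConvex5 at *
  tauto

lemma wSameSide (h : ConvexPos5 A B C D E) : line[ℝ, A, B].WSameSide E C := by
  rcases h with ⟨hC, -, hE, -⟩ | ⟨-, -, -, -, -, -, -, -, -, hE, -, hC, -⟩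
  · exact hE.wSameSide hC
  · rw [Set.pair_comm]
    exact hE.wSameSide hC

end ConvexPos5

lemma eq_of_two_mul_eq_three_sub_four_mul_sq {u v : ℝ} (hu : 0 ≤ u) (hv : 0 ≤ v)
    (huv : 2 * v = 3 - 4 * u ^ 2) (hvu : 2 * u = 3 - 4 * v ^ 2) : u = v := by
  have hfac : (u - v) * (1 - 2 * (u + v)) = 0 := by linear_combination (hvu - huv) / 2
  rcases mul_eq_zero.mp hfac with h | h
  · exact sub_eq_zero.mp h
  · have hv_sq : v ^ 2 ≤ (1 / 2) ^ 2 := pow_le_pow_left₀ hv (by linarith) 2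
    linarith

lemma eq_of_two_mul_cos_half_eq {β γ : ℝ} (hβ : β ∈ Set.Icc 0 Real.pi) (hγ : γ ∈ Set.Icc 0 Real.pi)
    (hβγ : 2 * Real.cos (γ / 2) = 3 - 4 * Real.cos (β / 2) ^ 2)
    (hγβ : 2 * Real.cos (β / 2) = 3 - 4 * Real.cos (γ / 2) ^ 2) : β = γ := by
  obtain ⟨hβ0, hβπ⟩ := hβ
  obtain ⟨hγ0, hγπ⟩ := hγ
  have hcos : Real.cos (β / 2) = Real.cos (γ / 2) :=
    eq_of_two_mul_eq_three_sub_four_mul_sq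
      (Real.cos_nonneg_of_mem_Icc ⟨by linarith, by linarith⟩)
      (Real.cos_nonneg_of_mem_Icc ⟨by linarith, by linarith⟩) hβγ hγβ
  linarith [Real.injOn_cos ⟨by linarith, by linarith⟩ ⟨by linarith, by linarith⟩ hcos]

lemma cos_eq_two_mul_cos_half_sq_sub_one (x : ℝ) :
    Real.cos x = 2 * Real.cos (x / 2) ^ 2 - 1 := by
  rw [← Real.cos_two_mul, mul_div_cancel₀ x two_ne_zero]

lemma two_mul_cos_half_eq_of_two_mul_add_eq_two_pi {α β γ δ : ℝ}
    (h1 : 2 * α + β = 2 * Real.pi) (h2 : 2 * δ + γ = 2 * Real.pi)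
    (h : 2 * Real.cos α + 2 * Real.cos β - 2 * Real.cos (α + β) = 1 + 2 * Real.cos δ) :
    2 * Real.cos (γ / 2) = 3 - 4 * Real.cos (β / 2) ^ 2 := by
  have hαβ : Real.cos (α + β) = Real.cos α := by
    rw [show α + β = 2 * Real.pi - α by linarith, Real.cos_two_pi_sub]
  have hδ : Real.cos δ = -Real.cos (γ / 2) := by
    rw [show δ = Real.pi - γ / 2 by linarith, Real.cos_pi_sub]
  rw [hαβ, hδ] at h
  linarith [cos_eq_two_mul_cos_half_sq_sub_one β]

lemma cos_eq_neg_cos_of_two_mul_cos_half_eq {β ε : ℝ}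
    (hβ : 2 * Real.cos (β / 2) = 3 - 4 * Real.cos (β / 2) ^ 2)
    (h : 2 * Real.cos β + 2 * Real.cos β - 2 * Real.cos (β + β) = 1 + 2 * Real.cos ε) :
    Real.cos ε = -Real.cos β := by
  have hlinear : Real.cos β = 1 / 2 - Real.cos (β / 2) := by
    linarith [cos_eq_two_mul_cos_half_sq_sub_one β]
  rw [← two_mul β, Real.cos_two_mul] at h
  have hsq : 4 * Real.cos β ^ 2 = 6 * Real.cos β + 1 := by
    rw [hlinear]
    linarith
  linarith

theorem type8_two_angles_sum_pi_general {V P : Type*} [NormedAddCommGroup V]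
    [InnerProductSpace ℝ V] [MetricSpace P] [NormedAddTorsor V P] {A B C D E : P}
    (hB : dist A B = dist B C) (hC : dist B C = dist C D) (hD : dist C D = dist D E)
    (hE : dist D E = dist E A) (sideAB : line[ℝ, A, B].WSameSide E C)
    (sideBC : line[ℝ, B, C].WSameSide A D) (sideCD : line[ℝ, C, D].WSameSide B E)
    (h1 : 2 * ∠ E A B + ∠ A B C = 2 * Real.pi) (h2 : 2 * ∠ C D E + ∠ B C D = 2 * Real.pi) :
    ∠ A B C + ∠ D E A = Real.pi := by
  have hAB : dist A B ≠ 0 := by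
    intro h
    obtain rfl := dist_eq_zero.mp h
    rw [angle_self_right, angle_self_left] at h1
    linarith [Real.pi_pos]
  have hBC : dist B C = dist A B := hB.symm
  have hCD : dist C D = dist A B := hC.symm.trans hBC
  have hDE : dist D E = dist A B := hD.symm.trans hCD
  have hEA : dist E A = dist A B := hE.symm.trans hDE
  have diagonalCE := two_mul_cos_angles_of_equilateral_pentagon hAB hEA rfl hBC hCD hDE sideAB
  have diagonalEB := two_mul_cos_angles_of_equilateral_pentagon hAB hBC hCD hDE hEA rfl sideCD
  have diagonalAD := two_mul_cos_angles_of_equilateral_pentagon hAB rfl hBC hCD hDE hEA sideBC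
  have hβγ := two_mul_cos_half_eq_of_two_mul_add_eq_two_pi h1 h2 diagonalCE
  have hγβ := two_mul_cos_half_eq_of_two_mul_add_eq_two_pi h2 h1
    (by rw [add_comm (∠ C D E)]; linarith)
  have hβ_eq_γ := eq_of_two_mul_cos_half_eq ⟨angle_nonneg A B C, angle_le_pi A B C⟩
    ⟨angle_nonneg B C D, angle_le_pi B C D⟩ hβγ hγβ
  rw [← hβ_eq_γ] at hβγ diagonalAD
  have hcos : Real.cos (∠ D E A) = Real.cos (Real.pi - ∠ A B C) := by
    rw [Real.cos_pi_sub, cos_eq_neg_cos_of_two_mul_cos_half_eq hβγ diagonalAD]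
  have hε := Real.injOn_cos ⟨angle_nonneg D E A, angle_le_pi D E A⟩
    ⟨sub_nonneg.mpr (angle_le_pi A B C), sub_le_self _ (angle_nonneg A B C)⟩ hcos
  linarith

theorem type8_two_angles_sum_pi
    (A B C D E : EuclideanSpace ℝ (Fin 2)) (α β γ δ ε : ℝ)
    (hconv : ConvexPos5 A B C D E) (hequi : Equilateral5 A B C D E)
    (hα : α = ∠ E A B) (hβ : β = ∠ A B C) (hγ : γ = ∠ B C D)
    (hδ : δ = ∠ C D E) (hε : ε = ∠ D E A)
    (h1 : 2 * α + β = 2 * Real.pi) (h2 : 2 * δ + γ = 2 * Real.pi) :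
    β + ε = Real.pi := by
  subst hα hβ hγ hδ hε
  obtain ⟨hB, hC, hD, hE⟩ := hequi
  exact type8_two_angles_sum_pi_general hB hC hD hE hconv.wSameSide hconv.rotate.wSameSide
    hconv.rotate.rotate.wSameSide h1 h2
end

section
/- Let ABCDE be a strictly convex equilateral pentagon in the Euclidean plane with interior angles α, β, γ, δ, ε at A, B, C, D, E respectively. If 2α + β = 2π and 2δ + γ = 2π (pentagon type 8 conditions), then α = δ and β = γ; that is, the pentagon is mirror symmetric. -/
/-!
Measure angles as oriented angles modulo `2π`, write `R θ` for the rotation by `θ`, and put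
`u = C - B`. As all sides have the same length, each side is the image of the preceding one,
reversed, under the rotation by the angle between them. Since the angle at `B` is `-2α`, the path
`B, A, E` gives `E - B = R (2α) u - R α u`; by the same computation on the path `C, D, E`,
`E - C = R (-δ) u - R (-2δ) u`. Hence
`u + R α u - R (2α) u + R (-δ) u - R (-2δ) u = 0`,
and as `u ≠ 0`, the unit complex numbers `z = exp (iα)` and `w = exp (-iδ)` satisfy
`1 + z - z² + w - w² = 0`. Combining this equation with its complex conjugate yields
`(1 - z w) (1 + z) (1 + w) = 0`. So `α = δ` unless one of the two angles is straight, which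
convexity excludes.
-/

open EuclideanGeometry

/-- Multiplying the complex conjugate of the hypothesis by `z ^ 2 * w ^ 2` and subtracting leaves
`(1 - z * w) * (1 + z) * (1 + w) = 0`. -/
lemma mul_eq_one_or_eq_neg_one_of_add_sub_sq_eq_zero {z w : Circle}
    (h : (1 + z - z ^ 2 + w - w ^ 2 : ℂ) = 0) : z * w = 1 ∨ z = -1 ∨ w = -1 := by
  have hconj : (1 + (z : ℂ)⁻¹ - (z : ℂ)⁻¹ ^ 2 + (w : ℂ)⁻¹ - (w : ℂ)⁻¹ ^ 2 : ℂ) = 0 := by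
    simpa [← Circle.coe_inv_eq_conj] using congrArg (starRingEnd ℂ) h
  have hz := z.coe_ne_zero
  have hw := w.coe_ne_zero
  field_simp at hconj
  have hprod : (1 - z * w : ℂ) * ((z + 1) * (w + 1)) = 0 := by
    linear_combination h - hconj
  simpa [sub_eq_zero, add_eq_zero_iff_eq_neg, Circle.ext_iff, eq_comm (a := (1 : ℂ))] using hprod

lemma add_eq_zero_or_eq_pi_of_toCircle_sum_eq_zero {θ φ : Real.Angle}
    (h : (1 + θ.toCircle - θ.toCircle ^ 2 + φ.toCircle - φ.toCircle ^ 2 : ℂ) = 0) :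
    θ + φ = 0 ∨ θ = Real.pi ∨ φ = Real.pi := by
  have hinj : Function.Injective Real.Angle.toCircle := AddCircle.homeomorphCircle'.injective
  have hpi : (Real.pi : Real.Angle).toCircle = -1 := by
    ext
    simp
  rw [← hinj.eq_iff, Real.Angle.toCircle_add, Real.Angle.toCircle_zero, ← hinj.eq_iff (a := θ),
    ← hinj.eq_iff (a := φ), hpi]
  exact mul_eq_one_or_eq_neg_one_of_add_sub_sq_eq_zero h

section OrientedPlane

variable {V P : Type*} [NormedAddCommGroup V] [InnerProductSpace ℝ V] [MetricSpace P]
  [NormedAddTorsor V P] [Fact (Module.finrank ℝ V = 2)] [Module.Oriented ℝ V (Fin 2)]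

local notation "o" => Module.Oriented.positiveOrientation

lemma oangle_sign_eq_sign_areaForm (x y : V) :
    (o.oangle x y).sign = SignType.sign (o.areaForm x y) := by
  obtain rfl | hx := eq_or_ne x 0
  · simp
  obtain rfl | hy := eq_or_ne y 0
  · simp
  rw [Real.Angle.sign, Orientation.oangle, Real.Angle.sin_coe, Complex.sin_arg, div_eq_mul_inv,
    sign_mul, sign_pos (inv_pos.2 (norm_pos_iff.2 (o.kahler_ne_zero hx hy))), mul_one]
  simp [Orientation.kahler_apply_apply]

lemma rotation_oangle_vsub {p₁ p₂ p₃ : P} (h : dist p₁ p₂ = dist p₂ p₃) :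
    o.rotation (∡ p₁ p₂ p₃) (p₁ -ᵥ p₂) = p₃ -ᵥ p₂ := by
  rwa [oangle, Orientation.rotation_oangle_eq_iff_norm_eq, ← dist_eq_norm_vsub,
    ← dist_eq_norm_vsub, dist_comm p₃]

lemma vsub_eq_rotation_sub_rotation {p₁ p₂ p₃ p₄ : P} (h₁₂ : dist p₁ p₂ = dist p₂ p₃)
    (h₂₃ : dist p₂ p₃ = dist p₃ p₄) (h : 2 • ∡ p₁ p₂ p₃ + ∡ p₂ p₃ p₄ = 0) :
    p₁ -ᵥ p₃ = o.rotation (2 • ∡ p₁ p₂ p₃) (p₄ -ᵥ p₃) -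
      o.rotation (∡ p₁ p₂ p₃) (p₄ -ᵥ p₃) := by
  have h₂ : p₂ -ᵥ p₃ = o.rotation (2 • ∡ p₁ p₂ p₃) (p₄ -ᵥ p₃) := by
    rw [← rotation_oangle_vsub h₂₃, Orientation.rotation_rotation, h, Orientation.rotation_zero,
      LinearIsometryEquiv.coe_refl, id]
  have h₁ : p₁ -ᵥ p₂ = -o.rotation (∡ p₁ p₂ p₃) (p₄ -ᵥ p₃) := by
    apply (o.rotation (∡ p₁ p₂ p₃)).injective
    rw [rotation_oangle_vsub h₁₂, map_neg, Orientation.rotation_rotation, ← two_nsmul, ← h₂,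
      neg_vsub_eq_vsub_rev]
  rw [← vsub_add_vsub_cancel p₁ p₂ p₃, h₁, h₂, neg_add_eq_sub]

lemma toCircle_sum_eq_zero_of_rotation_sum_eq_zero {u : V} (hu : u ≠ 0) {θ φ : Real.Angle}
    (h : u + o.rotation θ u - o.rotation (2 • θ) u + o.rotation φ u
      - o.rotation (2 • φ) u = 0) :
    (1 + θ.toCircle - θ.toCircle ^ 2 + φ.toCircle - φ.toCircle ^ 2 : ℂ) = 0 := by
  apply mul_right_cancel₀ (o.kahler_ne_zero hu hu)
  have hkahler := congrArg (o.kahler u) h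
  simp only [map_add, map_sub, map_zero, Orientation.kahler_rotation_right, two_nsmul,
    Real.Angle.toCircle_add, Circle.coe_mul] at hkahler
  linear_combination hkahler

theorem oangle_eq_or_eq_pi_of_equilateral {A B C D E : P} (hne : B ≠ C)
    (hAB : dist A B = dist B C) (hBC : dist B C = dist C D) (hCD : dist C D = dist D E)
    (hDE : dist D E = dist E A) (h₁ : 2 • ∡ E A B + ∡ A B C = 0)
    (h₂ : 2 • ∡ C D E + ∡ B C D = 0) :
    ∡ E A B = ∡ C D E ∨ ∡ E A B = Real.pi ∨ ∡ C D E = Real.pi := by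
  set u := C -ᵥ B
  have hEB : E -ᵥ B = o.rotation (2 • ∡ E A B) u - o.rotation (∡ E A B) u :=
    vsub_eq_rotation_sub_rotation (by rw [← hDE, ← hCD, ← hBC, hAB]) hAB h₁
  have hEC : E -ᵥ C = o.rotation (2 • -∡ C D E) (-u) - o.rotation (-∡ C D E) (-u) := by
    rw [neg_vsub_eq_vsub_rev, ← oangle_rev]
    refine vsub_eq_rotation_sub_rotation ?_ ?_ ?_
    · rw [dist_comm, ← hCD, dist_comm]
    · rw [dist_comm, ← hBC, dist_comm]
    · rw [oangle_rev C D E, oangle_rev B C D, smul_neg, ← neg_add, h₂, neg_zero]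
  have hclosed : u + o.rotation (∡ E A B) u - o.rotation (2 • ∡ E A B) u
      + o.rotation (-∡ C D E) u - o.rotation (2 • -∡ C D E) u = 0 := by
    have hsum : (E -ᵥ C) + u - (E -ᵥ B) = 0 := sub_eq_zero.2 (vsub_add_vsub_cancel E C B)
    rw [hEC, hEB, map_neg, map_neg] at hsum
    rw [← hsum]
    abel
  simpa [← sub_eq_add_neg, sub_eq_zero, neg_eq_iff_eq_neg] using
    add_eq_zero_or_eq_pi_of_toCircle_sum_eq_zero
      (toCircle_sum_eq_zero_of_rotation_sum_eq_zero (vsub_ne_zero.2 hne.symm) hclosed)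

lemma two_nsmul_oangle_add_oangle_eq_zero {p₁ p₂ p₃ p₄ p₅ p₆ : P} {s : SignType} (hs : s ≠ 0)
    (h₂ : (∡ p₁ p₂ p₃).sign = s) (h₅ : (∡ p₄ p₅ p₆).sign = s)
    (h : 2 * ∠ p₁ p₂ p₃ + ∠ p₄ p₅ p₆ = 2 * Real.pi) : 2 • ∡ p₁ p₂ p₃ + ∡ p₄ p₅ p₆ = 0 := by
  have hcoe : 2 • (∠ p₁ p₂ p₃ : Real.Angle) + ∠ p₄ p₅ p₆ = 0 := by
    rw [← Real.Angle.coe_two_pi, ← h, Real.Angle.coe_add, two_mul, Real.Angle.coe_add, two_nsmul]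
  cases s
  case zero => exact absurd rfl hs
  case neg =>
    rw [oangle_eq_neg_angle_of_sign_eq_neg_one h₂, oangle_eq_neg_angle_of_sign_eq_neg_one h₅,
      smul_neg, ← neg_add, hcoe, neg_zero]
  case pos =>
    rw [oangle_eq_angle_of_sign_eq_one h₂, oangle_eq_angle_of_sign_eq_one h₅, hcoe]

theorem type8_mirror_symmetric_general {A B C D E : P} {s : SignType} (hs : s ≠ 0)
    (hA : (∡ E A B).sign = s) (hB : (∡ A B C).sign = s) (hC : (∡ B C D).sign = s)
    (hD : (∡ C D E).sign = s) (hAB : dist A B = dist B C) (hBC : dist B C = dist C D)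
    (hCD : dist C D = dist D E) (hDE : dist D E = dist E A)
    (h₁ : 2 * ∠ E A B + ∠ A B C = 2 * Real.pi) (h₂ : 2 * ∠ C D E + ∠ B C D = 2 * Real.pi) :
    ∠ E A B = ∠ C D E ∧ ∠ A B C = ∠ B C D := by
  suffices h : ∠ E A B = ∠ C D E from ⟨h, by linarith⟩
  subst hA
  rw [angle_eq_iff_oangle_eq_of_sign_eq (left_ne_of_oangle_sign_ne_zero hs)
    (right_ne_of_oangle_sign_ne_zero hs) (left_ne_of_oangle_sign_ne_zero (hD ▸ hs))
    (right_ne_of_oangle_sign_ne_zero (hD ▸ hs)) hD.symm]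
  have hne_pi {p₁ p₂ p₃ : P} (h : (∡ p₁ p₂ p₃).sign = (∡ E A B).sign) : ∡ p₁ p₂ p₃ ≠ Real.pi :=
    fun hpi ↦ hs (by rw [← h, hpi, Real.Angle.sign_coe_pi])
  rcases oangle_eq_or_eq_pi_of_equilateral (right_ne_of_oangle_sign_ne_zero (hB ▸ hs)).symm
    hAB hBC hCD hDE (two_nsmul_oangle_add_oangle_eq_zero hs rfl hB h₁)
    (two_nsmul_oangle_add_oangle_eq_zero hs hD hC h₂) with h | h | h
  · exact h
  · exact absurd h (hne_pi rfl)
  · exact absurd h (hne_pi hD)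

end OrientedPlane

section CoordinatePlane

instance : Fact (Module.finrank ℝ (EuclideanSpace ℝ (Fin 2)) = 2) :=
  ⟨finrank_euclideanSpace_fin⟩

/-- The standard orientation of the coordinate plane. -/
noncomputable instance : Module.Oriented ℝ (EuclideanSpace ℝ (Fin 2)) (Fin 2) :=
  ⟨(EuclideanSpace.basisFun (Fin 2) ℝ).toBasis.orientation⟩

lemma areaForm_eq_det2 (u v : EuclideanSpace ℝ (Fin 2)) :
    Module.Oriented.positiveOrientation.areaForm u v = det2 u v := by
  rw [Orientation.areaForm_to_volumeForm,
    Module.Oriented.positiveOrientation.volumeForm_robust (EuclideanSpace.basisFun (Fin 2) ℝ) rfl]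
  simp [det2, Module.Basis.det_apply, Matrix.det_fin_two, Module.Basis.toMatrix_apply, mul_comm]

variable {A B C D E : EuclideanSpace ℝ (Fin 2)}

lemma SLeft.oangle_sign (h : SLeft A B C) : (∡ B A C).sign = 1 := by
  rw [oangle, oangle_sign_eq_sign_areaForm, areaForm_eq_det2]
  exact sign_pos h

lemma SLeft.oangle_rev_sign (h : SLeft A B C) : (∡ C A B).sign = -1 := by
  rw [← oangle_swap₁₃_sign, h.oangle_sign]

lemma ConvexPos5.exists_oangle_sign (h : ConvexPos5 A B C D E) :
    ∃ s : SignType, s ≠ 0 ∧ (∡ E A B).sign = s ∧ (∡ A B C).sign = s ∧ (∡ B C D).sign = s ∧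
      (∡ C D E).sign = s ∧ (∡ D E A).sign = s := by
  rcases h with ⟨-, -, hA, -, -, hB, -, -, hC, -, -, hD, -, -, hE⟩ |
    ⟨-, -, hE, -, -, hD, -, -, hC, -, -, hB, -, -, hA⟩
  · exact ⟨-1, by decide, hA.oangle_rev_sign, hB.oangle_rev_sign, hC.oangle_rev_sign,
      hD.oangle_rev_sign, hE.oangle_rev_sign⟩
  · exact ⟨1, by decide, hA.oangle_sign, hB.oangle_sign, hC.oangle_sign, hD.oangle_sign,
      hE.oangle_sign⟩

end CoordinatePlane

theorem type8_mirror_symmetric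
    (A B C D E : EuclideanSpace ℝ (Fin 2)) (α β γ δ ε : ℝ)
    (hconv : ConvexPos5 A B C D E) (hequi : Equilateral5 A B C D E)
    (hα : α = ∠ E A B) (hβ : β = ∠ A B C) (hγ : γ = ∠ B C D)
    (hδ : δ = ∠ C D E) (hε : ε = ∠ D E A)
    (h1 : 2 * α + β = 2 * Real.pi) (h2 : 2 * δ + γ = 2 * Real.pi) :
    α = δ ∧ β = γ := by
  subst hα hβ hγ hδ
  obtain ⟨hAB, hBC, hCD, hDE⟩ := hequi
  obtain ⟨s, hs, hA, hB, hC, hD, -⟩ := hconv.exists_oangle_sign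
  exact type8_mirror_symmetric_general hs hA hB hC hD hAB hBC hCD hDE h1 h2
end

section
/- The strictly convex equilateral pentagon of type 8 is unique up to similarity: if ABCDE and A'B'C'D'E' are strictly convex equilateral pentagons whose interior angles satisfy 2α + β = 2π, 2δ + γ = 2π and 2α' + β' = 2π, 2δ' + γ' = 2π respectively, then the corresponding interior angles agree: α = α', β = β', γ = γ', δ = δ', ε = ε'. -/
/-!
Identify the plane with `ℂ` and orient the pentagon counterclockwise. At each vertex, rotating the
outgoing edge by the interior angle gives the reversed incoming edge. Put `z = exp (iα)`,
`w = exp (iδ)`. Since `exp (iβ) = z⁻²` and `exp (iγ) = w⁻²`, every edge is a multiple of `BC` by a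
Laurent monomial in `z` or `w`, and the pentagon closes up exactly when
`1 + z⁻¹ - z⁻² + w - w² = 0`.

As `|z| = |w| = 1`, conjugation replaces `z` and `w` by their inverses, which gives a second
equation; `z²` times the first minus `w²` times the second factors as `(z - w) (1 + z) (1 + w)`.
The angles are less than `π`, so `z, w ≠ -1` and hence `α = δ`. The closing equation then reads
`4 cos² α - 2 cos α - 3 = 0`, which has only one root in `[-1, 1]`. Finally, comparing the edges
`DE` and `EA` gives `ε = α + δ - π`.
-/

open EuclideanGeometry

open Complex Set
open scoped Real ComplexConjugate

section UnitCircle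

lemma eq_or_eq_neg_one_of_laurent_eq_zero {K : Type*} [Field K] {z w : K} (hz : z ≠ 0) (hw : w ≠ 0)
    (h : 1 + z⁻¹ - z⁻¹ ^ 2 + w - w ^ 2 = 0) (h_inv : 1 + z - z ^ 2 + w⁻¹ - w⁻¹ ^ 2 = 0) :
    z = w ∨ z = -1 ∨ w = -1 := by
  have hfactor : (z - w) * ((z + 1) * (w + 1)) = 0 := by
    linear_combination z ^ 2 * h - w ^ 2 * h_inv - (z - z * z⁻¹ - 1) * mul_inv_cancel₀ hz
      + (w - w * w⁻¹ - 1) * mul_inv_cancel₀ hw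
  simpa only [mul_eq_zero, sub_eq_zero, add_eq_zero_iff_eq_neg] using hfactor

lemma injOn_exp_mul_I : InjOn (fun θ : ℝ ↦ exp (θ * I)) (Icc 0 π) := fun θ hθ φ hφ h ↦
  Real.injOn_cos hθ hφ (by simpa only [exp_ofReal_mul_I_re] using congrArg re h)

lemma exp_mul_I_ne_neg_one {θ : ℝ} (hθ : θ ∈ Ico 0 π) : exp (θ * I) ≠ -1 := fun h ↦
  hθ.2.ne <| injOn_exp_mul_I (Ico_subset_Icc_self hθ) (right_mem_Icc.2 Real.pi_nonneg)
    (h.trans exp_pi_mul_I.symm)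

lemma exp_mul_I_eq_inv_sq {θ φ : ℝ} (h : 2 * θ + φ = 2 * π) :
    exp (φ * I) = (exp (θ * I))⁻¹ ^ 2 := by
  rw [← exp_neg, ← exp_nat_mul, exp_eq_exp_iff_exists_int]
  refine ⟨1, ?_⟩
  have hφ : (φ : ℂ) = 2 * π - 2 * θ := by exact_mod_cast eq_sub_of_add_eq' h
  rw [hφ]
  push_cast
  ring

end UnitCircle

section ClosingEquation

/-- The common value of `α` and `δ` in the equilateral pentagon of type 8; its cosine is the root of
`4 x² - 2 x - 3` in `[-1, 1]`. -/
noncomputable def type8Angle : ℝ := Real.arccos ((1 - √13) / 4)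

lemma eq_one_sub_sqrt_div_four {c : ℝ} (hc : c ≤ 1) (h : 4 * c ^ 2 - 2 * c - 3 = 0) :
    c = (1 - √13) / 4 := by
  have hsq : √13 ^ 2 = 13 := Real.sq_sqrt (by norm_num)
  have hroots : (c - (1 - √13) / 4) * (c - (1 + √13) / 4) = 0 := by
    linear_combination h / 4 - hsq / 16
  have hlarge : c < (1 + √13) / 4 := by
    have : 3 < √13 := Real.lt_sqrt_of_sq_lt (by norm_num)
    linarith
  exact sub_eq_zero.1 <| (mul_eq_zero.1 hroots).resolve_right (sub_neg.2 hlarge).ne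

variable {α δ : ℝ}

lemma eq_of_closing_equation (hα : α ∈ Ico 0 π) (hδ : δ ∈ Ico 0 π)
    (h : 1 + (exp (α * I))⁻¹ - (exp (α * I))⁻¹ ^ 2 + exp (δ * I) - exp (δ * I) ^ 2 = 0) :
    α = δ := by
  have h_inv : 1 + exp (α * I) - exp (α * I) ^ 2 + (exp (δ * I))⁻¹ - (exp (δ * I))⁻¹ ^ 2 = 0 := by
    have hconj := congrArg conj h
    simpa only [map_add, map_sub, map_pow, map_inv₀, map_one, map_zero,
      ← inv_eq_conj (norm_exp_ofReal_mul_I _), inv_inv] using hconj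
  rcases eq_or_eq_neg_one_of_laurent_eq_zero (exp_ne_zero _) (exp_ne_zero _) h h_inv with
    heq | hneg | hneg
  · exact injOn_exp_mul_I (Ico_subset_Icc_self hα) (Ico_subset_Icc_self hδ) heq
  · exact absurd hneg (exp_mul_I_ne_neg_one hα)
  · exact absurd hneg (exp_mul_I_ne_neg_one hδ)

lemma eq_type8Angle_of_closing_equation (hα : α ∈ Icc 0 π)
    (h : 1 + (exp (α * I))⁻¹ - (exp (α * I))⁻¹ ^ 2 + exp (α * I) - exp (α * I) ^ 2 = 0) :
    α = type8Angle := by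
  have hcos : 2 * (Real.cos α : ℂ) = exp (α * I) + (exp (α * I))⁻¹ := by
    rw [ofReal_cos, two_cos, neg_mul, exp_neg]
  have hquad : 4 * (Real.cos α : ℂ) ^ 2 - 2 * Real.cos α - 3 = 0 := by
    linear_combination (2 * (Real.cos α : ℂ) + exp (α * I) + (exp (α * I))⁻¹ - 1) * hcos - h
      + 2 * mul_inv_cancel₀ (exp_ne_zero (α * I))
  rw [type8Angle, ← eq_one_sub_sqrt_div_four (Real.cos_le_one α) (by exact_mod_cast hquad),
    Real.arccos_cos hα.1 hα.2]

end ClosingEquation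

section Turns

/-- The standard identification of the Euclidean plane with `ℂ`, so that rotating an edge becomes
multiplication by a unit complex number. -/
noncomputable def toComplex : EuclideanSpace ℝ (Fin 2) ≃ₗᵢ[ℝ] ℂ :=
  orthonormalBasisOneI.repr.symm

lemma angle_eq_arg_div {x y : ℂ} (h : 0 < (x / y).im) :
    InnerProductGeometry.angle x y = arg (x / y) := by
  have hxy : x / y ≠ 0 := fun h₀ ↦ by simp [h₀] at h
  rw [div_ne_zero_iff] at hxy
  rw [angle_eq_abs_arg hxy.1 hxy.2, abs_of_nonneg (arg_nonneg_iff.2 h.le)]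

variable {A B C D E P Q R : EuclideanSpace ℝ (Fin 2)}

namespace SLeft

lemma right_sub_ne_zero (h : SLeft P Q R) : R - Q ≠ 0 := fun hRQ ↦ by
  rw [SLeft, sub_eq_zero.1 hRQ, det2, mul_comm, sub_self] at h
  exact h.false

lemma im_div_pos (h : SLeft P Q R) : 0 < (toComplex (P - Q) / toComplex (R - Q)).im := by
  have hnorm : 0 < normSq (toComplex (R - Q)) :=
    normSq_pos.2 (toComplex.map_ne_zero_iff.2 h.right_sub_ne_zero)
  rw [div_im, ← sub_div]
  refine div_pos ?_ hnorm
  simp only [SLeft, det2, PiLp.sub_apply] at h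
  simp only [toComplex, orthonormalBasisOneI_repr_symm_apply, PiLp.sub_apply, add_re, add_im,
    mul_re, mul_im, ofReal_re, ofReal_im, I_re, I_im]
  linarith

lemma angle_eq_arg (h : SLeft P Q R) :
    ∠ P Q R = arg (toComplex (P - Q) / toComplex (R - Q)) := by
  rw [← angle_eq_arg_div h.im_div_pos]
  exact (toComplex.toLinearIsometry.angle_map _ _).symm

lemma angle_mem_Ico (h : SLeft P Q R) : ∠ P Q R ∈ Ico 0 π :=
  ⟨angle_nonneg P Q R, h.angle_eq_arg.trans_lt (arg_lt_pi_iff.2 (.inr h.im_div_pos.ne'))⟩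

lemma toComplex_sub_eq (h : SLeft P Q R) (hdist : dist P Q = dist Q R) :
    toComplex (P - Q) = exp (∠ P Q R * I) * toComplex (R - Q) := by
  have hR : toComplex (R - Q) ≠ 0 := toComplex.map_ne_zero_iff.2 h.right_sub_ne_zero
  have hnorm : ‖toComplex (P - Q) / toComplex (R - Q)‖ = 1 := by
    rw [norm_div, div_eq_one_iff_eq (norm_ne_zero_iff.2 hR), toComplex.norm_map, toComplex.norm_map,
      ← dist_eq_norm, ← dist_eq_norm, hdist, dist_comm]
  have hpolar := norm_mul_exp_arg_mul_I (toComplex (P - Q) / toComplex (R - Q))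
  rwa [hnorm, ofReal_one, one_mul, ← h.angle_eq_arg, eq_div_iff hR, eq_comm] at hpolar

end SLeft

lemma CcwConvex5.rotate (h : CcwConvex5 A B C D E) : CcwConvex5 B C D E A := by
  unfold CcwConvex5 at *
  tauto

end Turns

/-- A strictly convex equilateral pentagon of type 8, that is, with `2α + β = 2π` and
`2δ + γ = 2π`, whose vertices are listed counterclockwise. -/
structure IsCcwType8 (A B C D E : EuclideanSpace ℝ (Fin 2)) : Prop where
  ccw : CcwConvex5 A B C D E
  equilateral : Equilateral5 A B C D E
  two_mul_angle_A_add : 2 * ∠ E A B + ∠ A B C = 2 * π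
  two_mul_angle_D_add : 2 * ∠ C D E + ∠ B C D = 2 * π

section Type8

variable {A B C D E : EuclideanSpace ℝ (Fin 2)}

namespace IsCcwType8

lemma edge_BA (h : IsCcwType8 A B C D E) :
    toComplex (A - B) = (exp (∠ E A B * I))⁻¹ ^ 2 * toComplex (C - B) := by
  obtain ⟨hABC, -⟩ := h.ccw
  rw [hABC.toComplex_sub_eq h.equilateral.1, exp_mul_I_eq_inv_sq h.two_mul_angle_A_add]

lemma edge_EA (h : IsCcwType8 A B C D E) :
    toComplex (A - E) = (exp (∠ E A B * I))⁻¹ * toComplex (C - B) := by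
  obtain ⟨-, -, -, -, -, -, -, -, -, -, -, -, hEAB, -⟩ := h.ccw
  obtain ⟨hAB, hBC, hCD, hDE⟩ := h.equilateral
  have hturn := hEAB.toComplex_sub_eq (by rw [hAB, hBC, hCD, hDE])
  rw [← neg_sub A E, ← neg_sub A B, map_neg, map_neg, h.edge_BA] at hturn
  linear_combination -hturn + (exp (∠ E A B * I))⁻¹ * toComplex (C - B)
    * mul_inv_cancel₀ (exp_ne_zero (∠ E A B * I))

lemma edge_CD (h : IsCcwType8 A B C D E) :
    toComplex (D - C) = -exp (∠ C D E * I) ^ 2 * toComplex (C - B) := by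
  obtain ⟨-, -, -, hBCD, -⟩ := h.ccw
  have hturn := hBCD.toComplex_sub_eq h.equilateral.2.1
  rw [exp_mul_I_eq_inv_sq h.two_mul_angle_D_add, ← neg_sub C B, map_neg] at hturn
  have hunit := mul_inv_cancel₀ (pow_ne_zero 2 (exp_ne_zero (∠ C D E * I)))
  linear_combination -exp (∠ C D E * I) ^ 2 * hturn - toComplex (D - C) * hunit

lemma edge_DE (h : IsCcwType8 A B C D E) :
    toComplex (E - D) = exp (∠ C D E * I) * toComplex (C - B) := by
  obtain ⟨-, -, -, -, -, -, hCDE, -⟩ := h.ccw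
  have hturn := hCDE.toComplex_sub_eq h.equilateral.2.2.1
  rw [← neg_sub D C, map_neg, h.edge_CD] at hturn
  refine mul_left_cancel₀ (exp_ne_zero (∠ C D E * I)) ?_
  linear_combination -hturn

lemma edge_BC_ne_zero (h : IsCcwType8 A B C D E) : toComplex (C - B) ≠ 0 :=
  toComplex.map_ne_zero_iff.2 h.ccw.1.right_sub_ne_zero

lemma closing_equation (h : IsCcwType8 A B C D E) :
    1 + (exp (∠ E A B * I))⁻¹ - (exp (∠ E A B * I))⁻¹ ^ 2 + exp (∠ C D E * I)
      - exp (∠ C D E * I) ^ 2 = 0 := by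
  have hclosed : toComplex (C - B) + toComplex (A - E) - toComplex (A - B) + toComplex (E - D)
      + toComplex (D - C) = 0 := by
    simp only [map_sub]
    ring
  rw [h.edge_BA, h.edge_EA, h.edge_CD, h.edge_DE] at hclosed
  refine mul_right_cancel₀ h.edge_BC_ne_zero ?_
  linear_combination hclosed

lemma angle_A_eq_angle_D (h : IsCcwType8 A B C D E) : ∠ E A B = ∠ C D E := by
  obtain ⟨-, -, -, -, -, -, hCDE, -, -, -, -, -, hEAB, -⟩ := h.ccw
  exact eq_of_closing_equation hEAB.angle_mem_Ico hCDE.angle_mem_Ico h.closing_equation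

lemma angle_A_eq_type8Angle (h : IsCcwType8 A B C D E) : ∠ E A B = type8Angle := by
  refine eq_type8Angle_of_closing_equation ⟨angle_nonneg E A B, angle_le_pi E A B⟩ ?_
  simpa only [h.angle_A_eq_angle_D] using h.closing_equation

lemma exp_angle_E (h : IsCcwType8 A B C D E) :
    exp (∠ D E A * I) = -(exp (∠ E A B * I) * exp (∠ C D E * I)) := by
  obtain ⟨-, -, -, -, -, -, -, -, -, hDEA, -⟩ := h.ccw
  have hturn := hDEA.toComplex_sub_eq h.equilateral.2.2.2
  rw [← neg_sub E D, map_neg, h.edge_DE, h.edge_EA] at hturn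
  refine mul_right_cancel₀ h.edge_BC_ne_zero ?_
  linear_combination -exp (∠ E A B * I) * hturn - exp (∠ D E A * I) * toComplex (C - B)
    * mul_inv_cancel₀ (exp_ne_zero (∠ E A B * I))

lemma angle_E_eq (h : IsCcwType8 A B C D E) : ∠ D E A = ∠ E A B + ∠ C D E - π := by
  refine injOn_exp_mul_I ⟨angle_nonneg D E A, angle_le_pi D E A⟩ ⟨?_, ?_⟩ ?_
  · linarith [h.two_mul_angle_A_add, h.two_mul_angle_D_add, angle_le_pi A B C,
      angle_le_pi B C D]
  · linarith [angle_le_pi E A B, angle_le_pi C D E]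
  · beta_reduce
    rw [h.exp_angle_E, ofReal_sub, ofReal_add, sub_mul, add_mul, exp_sub, exp_add, exp_pi_mul_I,
      div_neg, div_one]

lemma angles (h : IsCcwType8 A B C D E) :
    ∠ E A B = type8Angle ∧ ∠ C D E = type8Angle ∧ ∠ D E A = 2 * type8Angle - π := by
  have hA := h.angle_A_eq_type8Angle
  have hD := h.angle_A_eq_angle_D.symm.trans hA
  exact ⟨hA, hD, by rw [h.angle_E_eq, hA, hD, two_mul]⟩

end IsCcwType8

lemma isCcwType8_or_reverse (hconv : ConvexPos5 A B C D E) (hequi : Equilateral5 A B C D E)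
    (hA : 2 * ∠ E A B + ∠ A B C = 2 * π) (hD : 2 * ∠ C D E + ∠ B C D = 2 * π) :
    IsCcwType8 A B C D E ∨ IsCcwType8 D C B A E := by
  refine hconv.imp (⟨·, hequi, hA, hD⟩) fun hcw ↦ ⟨hcw.rotate, ?_, ?_, ?_⟩
  · obtain ⟨hAB, hBC, hCD, hDE⟩ := hequi
    simp only [Equilateral5, dist_comm D C, dist_comm C B, dist_comm B A, dist_comm A E,
      dist_comm E D, hAB, hBC, hCD, hDE, and_self]
  · rwa [angle_comm E D C, angle_comm D C B]
  · rwa [angle_comm B A E, angle_comm C B A]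

lemma type8_angles (hconv : ConvexPos5 A B C D E) (hequi : Equilateral5 A B C D E)
    (hA : 2 * ∠ E A B + ∠ A B C = 2 * π) (hD : 2 * ∠ C D E + ∠ B C D = 2 * π) :
    ∠ E A B = type8Angle ∧ ∠ C D E = type8Angle ∧ ∠ D E A = 2 * type8Angle - π := by
  rcases isCcwType8_or_reverse hconv hequi hA hD with h | h
  · exact h.angles
  · obtain ⟨hD, hA, hE⟩ := h.angles
    exact ⟨angle_comm E A B ▸ hA, angle_comm C D E ▸ hD, angle_comm D E A ▸ hE⟩

end Type8

theorem type8_unique_up_to_similarity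
    (A B C D E A' B' C' D' E' : EuclideanSpace ℝ (Fin 2))
    (α β γ δ ε α' β' γ' δ' ε' : ℝ)
    (hconv : ConvexPos5 A B C D E) (hequi : Equilateral5 A B C D E)
    (hα : α = ∠ E A B) (hβ : β = ∠ A B C) (hγ : γ = ∠ B C D)
    (hδ : δ = ∠ C D E) (hε : ε = ∠ D E A)
    (hconv' : ConvexPos5 A' B' C' D' E') (hequi' : Equilateral5 A' B' C' D' E')
    (hα' : α' = ∠ E' A' B') (hβ' : β' = ∠ A' B' C') (hγ' : γ' = ∠ B' C' D')
    (hδ' : δ' = ∠ C' D' E') (hε' : ε' = ∠ D' E' A')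
    (h1 : 2 * α + β = 2 * Real.pi) (h2 : 2 * δ + γ = 2 * Real.pi)
    (h1' : 2 * α' + β' = 2 * Real.pi) (h2' : 2 * δ' + γ' = 2 * Real.pi) :
    α = α' ∧ β = β' ∧ γ = γ' ∧ δ = δ' ∧ ε = ε' := by
  subst hα hβ hγ hδ hε hα' hβ' hγ' hδ' hε'
  obtain ⟨hA, hD, hE⟩ := type8_angles hconv hequi h1 h2
  obtain ⟨hA', hD', hE'⟩ := type8_angles hconv' hequi' h1' h2'
  have hAA' := hA.trans hA'.symm
  have hDD' := hD.trans hD'.symm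
  exact ⟨hAA', by linarith, by linarith, hDD', hE.trans hE'.symm⟩
end

section
/- There exists a strictly convex equilateral pentagon ABCDE in the Euclidean plane whose interior angles α, β, γ, δ, ε satisfy 2α + β = 2π and 2δ + γ = 2π (the type 8 pentagon P8). -/
/-!
A closed chain of five unit edges that turns left by an angle in `(0, π)` at every vertex and by
`2π` in total is a strictly convex pentagon, and its interior angles are `π` minus the turning
angles. The conditions `2α + β = 2π` and `2δ + γ = 2π` hold when the turning angles are `θ` at `A`
and `D` and `π - 2θ` at `B` and `C`, which leaves `2θ` at `E`. This chain is mirror-symmetric and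
closes up exactly when `cos 2θ + cos θ = 1 / 2`, an equation with a root in `(0, π / 2)` by the
intermediate value theorem.
-/

open EuclideanGeometry

lemma det2_self (u : EuclideanSpace ℝ (Fin 2)) : det2 u u = 0 := by
  unfold det2
  ring

lemma det2_add_right (u v w : EuclideanSpace ℝ (Fin 2)) :
    det2 u (v + w) = det2 u v + det2 u w := by
  simp only [det2, PiLp.add_apply]
  ring

lemma det2_neg_right (u v : EuclideanSpace ℝ (Fin 2)) : det2 u (-v) = -det2 u v := by
  simp only [det2, PiLp.neg_apply]
  ring

lemma SLeft.rotate {P Q R : EuclideanSpace ℝ (Fin 2)} (h : SLeft P Q R) : SLeft Q R P := by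
  simp only [SLeft, det2, PiLp.sub_apply] at h ⊢
  linarith

/-- The unit vector at angle `φ` counterclockwise from the first coordinate axis. It describes an
edge of an equilateral polygon by its direction; angles differing by `2π` give the same vector. -/
noncomputable def unitVec (φ : ℝ) : EuclideanSpace ℝ (Fin 2) :=
  !₂[Real.cos φ, Real.sin φ]

lemma norm_unitVec (φ : ℝ) : ‖unitVec φ‖ = 1 := by
  simp [unitVec, EuclideanSpace.norm_eq, Fin.sum_univ_two]

lemma unitVec_add_two_pi (φ : ℝ) : unitVec (φ + 2 * Real.pi) = unitVec φ := by
  simp only [unitVec, Real.cos_add_two_pi, Real.sin_add_two_pi]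

lemma inner_unitVec (φ ψ : ℝ) : inner ℝ (unitVec φ) (unitVec ψ) = Real.cos (ψ - φ) := by
  simp [unitVec, PiLp.inner_apply, Fin.sum_univ_two, Real.cos_sub]

lemma det2_unitVec (φ ψ : ℝ) : det2 (unitVec φ) (unitVec ψ) = Real.sin (ψ - φ) := by
  simp only [det2, unitVec, Matrix.cons_val_zero, Matrix.cons_val_one, Real.sin_sub]
  ring

lemma angle_unitVec {φ ψ : ℝ} (h : ψ - φ ∈ Set.Icc 0 Real.pi) :
    InnerProductGeometry.angle (unitVec φ) (unitVec ψ) = ψ - φ := by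
  rw [InnerProductGeometry.angle, inner_unitVec, norm_unitVec, norm_unitVec, mul_one, div_one,
    Real.arccos_cos h.1 h.2]

/-- The closed polygon `ABCDE` has unit edges `AB`, `BC`, `CD`, `DE`, `EA` in the directions
`a, b, c, d, e`, and turns left by less than a half turn at every vertex. The directions are real
numbers rather than angles modulo `2π`, and `a + 2π` in `turn_A` makes the total turning `2π`,
which excludes the pentagram. -/
structure IsLeftTurningUnitPentagon (A B C D E : EuclideanSpace ℝ (Fin 2)) (a b c d e : ℝ) :
    Prop where
  edge_AB : B - A = unitVec a
  edge_BC : C - B = unitVec b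
  edge_CD : D - C = unitVec c
  edge_DE : E - D = unitVec d
  edge_EA : A - E = unitVec e
  turn_A : a + 2 * Real.pi - e ∈ Set.Ioo 0 Real.pi
  turn_B : b - a ∈ Set.Ioo 0 Real.pi
  turn_C : c - b ∈ Set.Ioo 0 Real.pi
  turn_D : d - c ∈ Set.Ioo 0 Real.pi
  turn_E : e - d ∈ Set.Ioo 0 Real.pi

namespace IsLeftTurningUnitPentagon

variable {A B C D E : EuclideanSpace ℝ (Fin 2)} {a b c d e : ℝ}

lemma rotate (h : IsLeftTurningUnitPentagon A B C D E a b c d e) :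
    IsLeftTurningUnitPentagon B C D E A b c d e (a + 2 * Real.pi) where
  edge_AB := h.edge_BC
  edge_BC := h.edge_CD
  edge_CD := h.edge_DE
  edge_DE := h.edge_EA
  edge_EA := by rw [unitVec_add_two_pi, h.edge_AB]
  turn_A := by rw [add_sub_add_right_eq_sub]; exact h.turn_B
  turn_B := h.turn_C
  turn_C := h.turn_D
  turn_D := h.turn_E
  turn_E := h.turn_A

lemma sLeft_next (h : IsLeftTurningUnitPentagon A B C D E a b c d e) : SLeft A B C := by
  have hAC : C - A = unitVec a + unitVec b := by rw [← h.edge_AB, ← h.edge_BC]; abel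
  rw [SLeft, h.edge_AB, hAC, det2_add_right, det2_self, zero_add, det2_unitVec]
  exact Real.sin_pos_of_mem_Ioo h.turn_B

lemma sLeft_opposite (h : IsLeftTurningUnitPentagon A B C D E a b c d e) : SLeft A B D := by
  obtain ⟨hA, -⟩ := h.turn_A
  obtain ⟨hB, hB'⟩ := h.turn_B
  obtain ⟨hC, -⟩ := h.turn_C
  obtain ⟨hD, -⟩ := h.turn_D
  obtain ⟨hE, -⟩ := h.turn_E
  rw [SLeft, h.edge_AB]
  -- Either `BC` and `CD` do not head to the right of `AB`, so the path `BCD` climbs away from the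
  -- line `AB`, or `DE` and `EA` both head to its right, so the path `DEA` descends to it.
  rcases le_or_gt (c - a) Real.pi with hca | hca
  · have hAD : D - A = unitVec a + unitVec b + unitVec c := by
      rw [← h.edge_AB, ← h.edge_BC, ← h.edge_CD]; abel
    have hb : 0 < Real.sin (b - a) := Real.sin_pos_of_pos_of_lt_pi hB hB'
    have hc : 0 ≤ Real.sin (c - a) := Real.sin_nonneg_of_nonneg_of_le_pi (by linarith) hca
    rw [hAD, det2_add_right, det2_add_right, det2_self, det2_unitVec, det2_unitVec]
    linarith
  · have hAD : D - A = -(unitVec d + unitVec e) := by rw [← h.edge_DE, ← h.edge_EA]; abel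
    have hd : 0 < -Real.sin (d - a) := by
      rw [← Real.sin_sub_pi]
      exact Real.sin_pos_of_pos_of_lt_pi (by linarith) (by linarith)
    have he : 0 < -Real.sin (e - a) := by
      rw [← Real.sin_sub_pi]
      exact Real.sin_pos_of_pos_of_lt_pi (by linarith) (by linarith)
    rw [hAD, det2_neg_right, det2_add_right, det2_unitVec, det2_unitVec]
    linarith

lemma sLeft_edge (h : IsLeftTurningUnitPentagon A B C D E a b c d e) :
    SLeft A B C ∧ SLeft A B D ∧ SLeft A B E :=
  ⟨h.sLeft_next, h.sLeft_opposite, h.rotate.rotate.rotate.rotate.sLeft_next.rotate⟩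

lemma ccwConvex5 (h : IsLeftTurningUnitPentagon A B C D E a b c d e) :
    CcwConvex5 A B C D E := by
  obtain ⟨hABC, hABD, hABE⟩ := h.sLeft_edge
  obtain ⟨hBCD, hBCE, hBCA⟩ := h.rotate.sLeft_edge
  obtain ⟨hCDE, hCDA, hCDB⟩ := h.rotate.rotate.sLeft_edge
  obtain ⟨hDEA, hDEB, hDEC⟩ := h.rotate.rotate.rotate.sLeft_edge
  exact ⟨hABC, hABD, hABE, hBCD, hBCE, hBCA, hCDE, hCDA, hCDB, hDEA, hDEB, hDEC,
    h.rotate.rotate.rotate.rotate.sLeft_edge⟩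

lemma dist_eq_one (h : IsLeftTurningUnitPentagon A B C D E a b c d e) : dist A B = 1 := by
  rw [dist_comm, dist_eq_norm, h.edge_AB, norm_unitVec]

lemma equilateral5 (h : IsLeftTurningUnitPentagon A B C D E a b c d e) :
    Equilateral5 A B C D E := by
  have hBC := h.rotate.dist_eq_one
  have hCD := h.rotate.rotate.dist_eq_one
  have hDE := h.rotate.rotate.rotate.dist_eq_one
  have hEA := h.rotate.rotate.rotate.rotate.dist_eq_one
  exact ⟨h.dist_eq_one.trans hBC.symm, hBC.trans hCD.symm, hCD.trans hDE.symm, hDE.trans hEA.symm⟩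

lemma angle_eq (h : IsLeftTurningUnitPentagon A B C D E a b c d e) :
    ∠ A B C = Real.pi - (b - a) := by
  rw [EuclideanGeometry.angle, vsub_eq_sub, vsub_eq_sub, ← neg_sub B A, h.edge_AB, h.edge_BC,
    InnerProductGeometry.angle_neg_left, angle_unitVec (Set.Ioo_subset_Icc_self h.turn_B)]

end IsLeftTurningUnitPentagon

lemma exists_cos_two_mul_add_cos_eq_half :
    ∃ θ ∈ Set.Ioo 0 (Real.pi / 2), Real.cos (2 * θ) + Real.cos θ = 1 / 2 := by
  have hcont : ContinuousOn (fun θ : ℝ ↦ Real.cos (2 * θ) + Real.cos θ)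
      (Set.Icc 0 (Real.pi / 2)) := by fun_prop
  refine intermediate_value_Ioo' Real.pi_div_two_pos.le hcont ⟨?_, ?_⟩
  · rw [mul_div_cancel₀ _ two_ne_zero, Real.cos_pi, Real.cos_pi_div_two]
    norm_num
  · rw [mul_zero, Real.cos_zero]
    norm_num

lemma exists_edges_eq_of_sum_eq_zero {V : Type*} [AddCommGroup V] {u v w x y : V}
    (h : u + v + w + x + y = 0) :
    ∃ A B C D E : V, B - A = u ∧ C - B = v ∧ D - C = w ∧ E - D = x ∧ A - E = y :=
  ⟨0, u, u + v, u + v + w, u + v + w + x, sub_zero u, add_sub_cancel_left _ _,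
    add_sub_cancel_left _ _, add_sub_cancel_left _ _,
    by rw [zero_sub, neg_eq_of_add_eq_zero_right h]⟩

lemma sum_unitVec_eq_zero {θ : ℝ} (h : Real.cos (2 * θ) + Real.cos θ = 1 / 2) :
    unitVec (2 * θ - Real.pi) + unitVec 0 + unitVec (Real.pi - 2 * θ) + unitVec (Real.pi - θ) +
      unitVec (θ + Real.pi) = 0 := by
  ext i
  fin_cases i
  · simp only [unitVec, PiLp.add_apply, PiLp.zero_apply, Fin.zero_eta, Matrix.cons_val_zero,
      Real.cos_zero, Real.cos_sub_pi, Real.cos_pi_sub, Real.cos_add_pi]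
    linarith
  · simp [unitVec]

lemma exists_isLeftTurningUnitPentagon {θ : ℝ} (hθ : θ ∈ Set.Ioo 0 (Real.pi / 2))
    (h : Real.cos (2 * θ) + Real.cos θ = 1 / 2) :
    ∃ A B C D E, IsLeftTurningUnitPentagon A B C D E
      (2 * θ - Real.pi) 0 (Real.pi - 2 * θ) (Real.pi - θ) (θ + Real.pi) := by
  obtain ⟨A, B, C, D, E, hAB, hBC, hCD, hDE, hEA⟩ :=
    exists_edges_eq_of_sum_eq_zero (sum_unitVec_eq_zero h)
  obtain ⟨hpos, hlt⟩ := hθ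
  refine ⟨A, B, C, D, E, hAB, hBC, hCD, hDE, hEA, ?_, ?_, ?_, ?_, ?_⟩ <;>
    constructor <;> linarith

theorem type8_exists :
    ∃ A B C D E : EuclideanSpace ℝ (Fin 2),
      ConvexPos5 A B C D E ∧ Equilateral5 A B C D E ∧
      2 * ∠ E A B + ∠ A B C = 2 * Real.pi ∧
      2 * ∠ C D E + ∠ B C D = 2 * Real.pi := by
  obtain ⟨θ, hθ, hcos⟩ := exists_cos_two_mul_add_cos_eq_half
  obtain ⟨A, B, C, D, E, h⟩ := exists_isLeftTurningUnitPentagon hθ hcos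
  refine ⟨A, B, C, D, E, Or.inl h.ccwConvex5, h.equilateral5, ?_, ?_⟩
  · rw [h.rotate.rotate.rotate.rotate.angle_eq, h.angle_eq]
    ring
  · rw [h.rotate.rotate.angle_eq, h.rotate.angle_eq]
    ring
end

section
/- The strictly convex equilateral pentagon of type 7 is unique up to similarity: if ABCDE and A'B'C'D'E' are strictly convex equilateral pentagons whose interior angles satisfy 2β + γ = 2π, 2δ + α = 2π and 2β' + γ' = 2π, 2δ' + α' = 2π respectively, then the corresponding interior angles agree: α = α', β = β', γ = γ', δ = δ', ε = ε'. -/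
open EuclideanGeometry

/-!
Identify the plane with `ℂ` so that the pentagon runs counterclockwise. At each corner the two
edges have equal length, so one is obtained from the other through multiplication by the exponential
of the angle. With `b = e^{iβ}` and `d = e^{iδ}`, the angle conditions say that the corners at `C`
and `A` contribute `b⁻²` and `d⁻²`; hence all edges are multiples of `BC` by monomials in `b` and
`d`, and closing up gives `b + d⁻¹ - d + (b⁻¹ - b) d = 0`, that is,
`e^{iβ} = 2i (sin δ + sin β e^{iδ})`. Separating real and imaginary parts,
`cos β = -2 sin β sin δ` and `(1 - 2 cos δ) sin β = 2 sin δ`, and eliminating `β` leaves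
`16 c⁴ - 40 c² + 4 c + 19 = 0` for `c = cos δ`. Since `2δ = 2π - α ≥ π`, the cosine `c` lies in
`[-1, 0]`, where the quartic is strictly increasing. So `δ` is determined, then `β`, then `α` and
`γ`; the corner at `E` gives `e^{iε} = -b d`, which determines `ε`.
-/

open Complex Set

section ClosingRelation

/-- The condition on the angles `β` and `δ` under which an equilateral pentagon with
`2β + γ = 2π` and `2δ + α = 2π` closes up. -/
def ClosingRelation (β δ : ℝ) : Prop :=
  cexp (β * I) = 2 * I * (Real.sin δ + Real.sin β * cexp (δ * I))

variable {β δ β' δ' : ℝ}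

lemma ClosingRelation.cos_left (h : ClosingRelation β δ) :
    Real.cos β = -2 * Real.sin β * Real.sin δ := by
  have hre := congrArg re h
  rw [exp_ofReal_mul_I_re, mul_assoc, ← ofReal_ofNat, re_ofReal_mul, I_mul_re, add_im, ofReal_im,
    im_ofReal_mul, exp_ofReal_mul_I_im] at hre
  linear_combination hre

lemma ClosingRelation.sin_left (h : ClosingRelation β δ) :
    Real.sin β * (1 - 2 * Real.cos δ) = 2 * Real.sin δ := by
  have him := congrArg im h
  rw [exp_ofReal_mul_I_im, mul_assoc, ← ofReal_ofNat, im_ofReal_mul, I_mul_im, add_re, ofReal_re,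
    re_ofReal_mul, exp_ofReal_mul_I_re] at him
  linear_combination him

lemma ClosingRelation.cos_left_mul (h : ClosingRelation β δ) :
    Real.cos β * (1 - 2 * Real.cos δ) = -4 * Real.sin δ ^ 2 := by
  rw [h.cos_left]
  linear_combination -2 * Real.sin δ * h.sin_left

lemma ClosingRelation.quartic_cos_eq_zero (h : ClosingRelation β δ) :
    16 * Real.cos δ ^ 4 - 40 * Real.cos δ ^ 2 + 4 * Real.cos δ + 19 = 0 := by
  have hsq : (1 - 2 * Real.cos δ) ^ 2 = 16 * (Real.sin δ ^ 2) ^ 2 + 4 * Real.sin δ ^ 2 := calc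
    (1 - 2 * Real.cos δ) ^ 2
      = (Real.cos β * (1 - 2 * Real.cos δ)) ^ 2 + (Real.sin β * (1 - 2 * Real.cos δ)) ^ 2 := by
        linear_combination -(1 - 2 * Real.cos δ) ^ 2 * Real.cos_sq_add_sin_sq β
    _ = 16 * (Real.sin δ ^ 2) ^ 2 + 4 * Real.sin δ ^ 2 := by
        rw [h.cos_left_mul, h.sin_left]
        ring
  rw [Real.sin_sq] at hsq
  linear_combination -hsq

lemma strictMonoOn_quartic :
    StrictMonoOn (fun c : ℝ => 16 * c ^ 4 - 40 * c ^ 2 + 4 * c + 19) (Icc (-1) 0) := by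
  rintro x ⟨hx, -⟩ y ⟨-, hy⟩ hxy
  have hslope : 0 < -(x + y) * (40 - 16 * (x ^ 2 + y ^ 2)) + 4 := by
    have : 0 ≤ -(x + y) * (40 - 16 * (x ^ 2 + y ^ 2)) :=
      mul_nonneg (by linarith) (by nlinarith)
    linarith
  rw [← sub_pos]
  calc 0 < (y - x) * (-(x + y) * (40 - 16 * (x ^ 2 + y ^ 2)) + 4) :=
        mul_pos (sub_pos.2 hxy) hslope
    _ = _ := by ring

lemma ClosingRelation.unique (h : ClosingRelation β δ) (h' : ClosingRelation β' δ')
    (hβ : β ∈ Icc 0 Real.pi) (hβ' : β' ∈ Icc 0 Real.pi)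
    (hδ : δ ∈ Icc (Real.pi / 2) Real.pi) (hδ' : δ' ∈ Icc (Real.pi / 2) Real.pi) :
    β = β' ∧ δ = δ' := by
  have cos_mem {θ : ℝ} (hθ : θ ∈ Icc (Real.pi / 2) Real.pi) : Real.cos θ ∈ Icc (-1) 0 :=
    ⟨Real.neg_one_le_cos θ,
      Real.cos_nonpos_of_pi_div_two_le_of_le hθ.1 (by linarith [hθ.2, Real.pi_pos])⟩
  have hcos : Real.cos δ = Real.cos δ' :=
    strictMonoOn_quartic.injOn (cos_mem hδ) (cos_mem hδ')
      (h.quartic_cos_eq_zero.trans h'.quartic_cos_eq_zero.symm)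
  have hsub : Icc (Real.pi / 2) Real.pi ⊆ Icc 0 Real.pi := Icc_subset_Icc_left (by positivity)
  obtain rfl : δ = δ' := Real.injOn_cos (hsub hδ) (hsub hδ') hcos
  have hne : 1 - 2 * Real.cos δ ≠ 0 := by linarith [(cos_mem hδ).2]
  exact ⟨Real.injOn_cos hβ hβ' (mul_right_cancel₀ hne (h.cos_left_mul.trans h'.cos_left_mul.symm)),
    rfl⟩

end ClosingRelation

section Edges

lemma closing_of_edge_ratios {K : Type*} [Field K] {u₁ u₂ u₃ u₄ u₅ b d e : K}
    (hu : u₂ ≠ 0) (hb : b ≠ 0) (hd : d ≠ 0) (hsum : u₁ + u₂ + u₃ + u₄ + u₅ = 0)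
    (h₁₂ : -u₁ = b * u₂) (h₂₃ : -u₂ = (b ^ 2)⁻¹ * u₃) (h₃₄ : -u₃ = d * u₄)
    (h₄₅ : -u₄ = e * u₅) (h₅₁ : -u₅ = (d ^ 2)⁻¹ * u₁) :
    b + d⁻¹ - d + (b⁻¹ - b) * d = 0 ∧ e = -(b * d) := by
  obtain rfl : u₁ = -b * u₂ := by linear_combination -h₁₂
  obtain rfl : u₃ = -b ^ 2 * u₂ := by
    field_simp at h₂₃
    linear_combination -h₂₃
  obtain rfl : u₄ = b ^ 2 * d⁻¹ * u₂ := by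
    field_simp at h₃₄ ⊢
    linear_combination -h₃₄
  obtain rfl : u₅ = b * (d ^ 2)⁻¹ * u₂ := by linear_combination -h₅₁
  field_simp at hsum h₄₅ ⊢
  constructor
  · apply mul_left_cancel₀ (mul_ne_zero hb hu)
    linear_combination b * hsum
  · linear_combination -h₄₅

lemma exp_two_pi_sub_two_mul_mul_I (θ : ℝ) :
    cexp ((2 * Real.pi - 2 * θ : ℝ) * I) = (cexp (θ * I) ^ 2)⁻¹ := by
  rw [← exp_nat_mul, ← exp_neg, exp_eq_exp_iff_exists_int]
  exact ⟨1, by push_cast; ring⟩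

lemma closingRelation_of_edges {u₁ u₂ u₃ u₄ u₅ : ℂ} {α β γ δ ε : ℝ}
    (hu : u₂ ≠ 0) (hsum : u₁ + u₂ + u₃ + u₄ + u₅ = 0)
    (hβ : -u₁ = cexp (β * I) * u₂) (hγ : -u₂ = cexp (γ * I) * u₃) (hδ : -u₃ = cexp (δ * I) * u₄)
    (hε : -u₄ = cexp (ε * I) * u₅) (hα : -u₅ = cexp (α * I) * u₁)
    (hβγ : 2 * β + γ = 2 * Real.pi) (hδα : 2 * δ + α = 2 * Real.pi) :
    ClosingRelation β δ ∧ Real.cos ε = -Real.cos (β + δ) := by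
  rw [eq_sub_of_add_eq' hβγ, exp_two_pi_sub_two_mul_mul_I] at hγ
  rw [eq_sub_of_add_eq' hδα, exp_two_pi_sub_two_mul_mul_I] at hα
  obtain ⟨hclose, hexp⟩ :=
    closing_of_edge_ratios hu (exp_ne_zero _) (exp_ne_zero _) hsum hβ hγ hδ hε hα
  have two_I_mul_sin (θ : ℝ) : 2 * I * Real.sin θ = cexp (θ * I) - (cexp (θ * I))⁻¹ := by
    rw [ofReal_sin, Complex.sin, ← exp_neg, neg_mul]
    linear_combination (cexp (-(θ * I)) - cexp (θ * I)) * I_sq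
  constructor
  · rw [ClosingRelation, mul_add, ← mul_assoc, two_I_mul_sin, two_I_mul_sin]
    linear_combination hclose
  · rw [← exp_add, ← add_mul, ← ofReal_add] at hexp
    simpa only [neg_re, exp_ofReal_mul_I_re] using congrArg re hexp

end Edges

section Corners

lemma div_eq_norm_mul_exp_angle {x y : ℂ} (h : 0 ≤ (x / y).im) :
    x / y = ‖x / y‖ * cexp (InnerProductGeometry.angle x y * I) := by
  rcases eq_or_ne x 0 with rfl | hx
  · simp
  rcases eq_or_ne y 0 with rfl | hy
  · simp
  rw [angle_eq_abs_arg hx hy, abs_of_nonneg (arg_nonneg_iff.2 h), norm_mul_exp_arg_mul_I]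

lemma im_div_pos_iff {x y : ℂ} : 0 < (x / y).im ↔ 0 < x.im * y.re - x.re * y.im := by
  rcases eq_or_ne y 0 with rfl | hy
  · simp
  · rw [div_im, ← sub_div, div_pos_iff_of_pos_right (normSq_pos.2 hy)]

/-- The corner `P`, `Q`, `R`, carried to `ℂ` by `f`, is traversed counterclockwise: the
counterclockwise rotation about `Q` by the angle `∠ P Q R` takes the direction of `R` to that of
`P`. The isometry `f` may reverse orientation, so that one notion serves clockwise pentagons too. -/
def IsCcwCorner (f : EuclideanSpace ℝ (Fin 2) ≃ₗᵢ[ℝ] ℂ) (P Q R : EuclideanSpace ℝ (Fin 2)) :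
    Prop :=
  0 < (f (P - Q) / f (R - Q)).im

variable {f : EuclideanSpace ℝ (Fin 2) ≃ₗᵢ[ℝ] ℂ} {A B C D E P Q R : EuclideanSpace ℝ (Fin 2)}

lemma IsCcwCorner.map_sub_ne_zero (h : IsCcwCorner f P Q R) : f (R - Q) ≠ 0 := by
  intro h0
  simp [IsCcwCorner, h0] at h

lemma IsCcwCorner.neg_map_sub (h : IsCcwCorner f P Q R) (hdist : dist P Q = dist Q R) :
    -f (Q - P) = cexp (∠ P Q R * I) * f (R - Q) := by
  have hnorm : ‖f (P - Q) / f (R - Q)‖ = 1 := by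
    rw [norm_div, f.norm_map, f.norm_map, ← dist_eq_norm, ← dist_eq_norm, dist_comm R, hdist,
      dist_comm, dist_eq_norm, ← f.norm_map]
    exact div_self (norm_ne_zero_iff.2 h.map_sub_ne_zero)
  have hdiv := div_eq_norm_mul_exp_angle h.le
  rw [hnorm, ofReal_one, one_mul, div_eq_iff h.map_sub_ne_zero] at hdiv
  rw [← map_neg, neg_sub, hdiv, ← f.coe_toLinearIsometry, LinearIsometry.angle_map]
  rfl

lemma isCcwCorner_trans_conjLIE :
    IsCcwCorner (f.trans conjLIE) P Q R ↔ IsCcwCorner f R Q P := by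
  simp only [IsCcwCorner, im_div_pos_iff, LinearIsometryEquiv.trans_apply, conjLIE_apply, conj_re,
    conj_im]
  ring_nf

lemma SLeft.isCcwCorner (h : SLeft P Q R) :
    IsCcwCorner orthonormalBasisOneI.repr.symm P Q R := by
  simp only [SLeft, det2, PiLp.sub_apply] at h
  have repr_symm_apply (v : EuclideanSpace ℝ (Fin 2)) :
      orthonormalBasisOneI.repr.symm v = ⟨v 0, v 1⟩ := by
    rw [orthonormalBasisOneI_repr_symm_apply, mk_eq_add_mul_I]
  simp only [IsCcwCorner, im_div_pos_iff, repr_symm_apply, PiLp.sub_apply]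
  linarith

lemma ConvexPos5.exists_isCcwCorner (h : ConvexPos5 A B C D E) :
    ∃ f : EuclideanSpace ℝ (Fin 2) ≃ₗᵢ[ℝ] ℂ, IsCcwCorner f A B C ∧ IsCcwCorner f B C D ∧
      IsCcwCorner f C D E ∧ IsCcwCorner f D E A ∧ IsCcwCorner f E A B := by
  rcases h with ⟨hB, -, -, hC, -, -, hD, -, -, hE, -, -, hA, -, -⟩ |
    ⟨hD, -, -, hC, -, -, hB, -, -, hA, -, -, hE, -, -⟩
  · exact ⟨_, hB.isCcwCorner, hC.isCcwCorner, hD.isCcwCorner, hE.isCcwCorner, hA.isCcwCorner⟩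
  · exact ⟨orthonormalBasisOneI.repr.symm.trans conjLIE,
      isCcwCorner_trans_conjLIE.2 hB.isCcwCorner, isCcwCorner_trans_conjLIE.2 hC.isCcwCorner,
      isCcwCorner_trans_conjLIE.2 hD.isCcwCorner, isCcwCorner_trans_conjLIE.2 hE.isCcwCorner,
      isCcwCorner_trans_conjLIE.2 hA.isCcwCorner⟩

lemma ConvexPos5.closingRelation (hconv : ConvexPos5 A B C D E)
    (hequi : Equilateral5 A B C D E) (hβγ : 2 * ∠ A B C + ∠ B C D = 2 * Real.pi)
    (hδα : 2 * ∠ C D E + ∠ E A B = 2 * Real.pi) :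
    ClosingRelation (∠ A B C) (∠ C D E) ∧
      Real.cos (∠ D E A) = -Real.cos (∠ A B C + ∠ C D E) := by
  obtain ⟨f, hB, hC, hD, hE, hA⟩ := hconv.exists_isCcwCorner
  obtain ⟨hAB, hBC, hCD, hDE⟩ := hequi
  have hEA : dist E A = dist A B := by rw [hAB, hBC, hCD, hDE]
  have hsum : f (B - A) + f (C - B) + f (D - C) + f (E - D) + f (A - E) = 0 := by
    simp only [map_sub]
    ring
  exact closingRelation_of_edges hB.map_sub_ne_zero hsum (hB.neg_map_sub hAB)
    (hC.neg_map_sub hBC) (hD.neg_map_sub hCD) (hE.neg_map_sub hDE) (hA.neg_map_sub hEA) hβγ hδα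

end Corners

theorem type7_unique_up_to_similarity
    (A B C D E A' B' C' D' E' : EuclideanSpace ℝ (Fin 2))
    (α β γ δ ε α' β' γ' δ' ε' : ℝ)
    (hconv : ConvexPos5 A B C D E) (hequi : Equilateral5 A B C D E)
    (hα : α = ∠ E A B) (hβ : β = ∠ A B C) (hγ : γ = ∠ B C D)
    (hδ : δ = ∠ C D E) (hε : ε = ∠ D E A)
    (hconv' : ConvexPos5 A' B' C' D' E') (hequi' : Equilateral5 A' B' C' D' E')
    (hα' : α' = ∠ E' A' B') (hβ' : β' = ∠ A' B' C') (hγ' : γ' = ∠ B' C' D')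
    (hδ' : δ' = ∠ C' D' E') (hε' : ε' = ∠ D' E' A')
    (h1 : 2 * β + γ = 2 * Real.pi) (h2 : 2 * δ + α = 2 * Real.pi)
    (h1' : 2 * β' + γ' = 2 * Real.pi) (h2' : 2 * δ' + α' = 2 * Real.pi) :
    α = α' ∧ β = β' ∧ γ = γ' ∧ δ = δ' ∧ ε = ε' := by
  subst hα hβ hγ hδ hε hα' hβ' hγ' hδ' hε'
  have angle_mem (P Q R : EuclideanSpace ℝ (Fin 2)) : ∠ P Q R ∈ Icc 0 Real.pi :=
    ⟨angle_nonneg P Q R, angle_le_pi P Q R⟩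
  obtain ⟨hclose, hcos⟩ := hconv.closingRelation hequi h1 h2
  obtain ⟨hclose', hcos'⟩ := hconv'.closingRelation hequi' h1' h2'
  obtain ⟨hβ, hδ⟩ := hclose.unique hclose' (angle_mem A B C) (angle_mem A' B' C')
    ⟨by linarith [angle_le_pi E A B], angle_le_pi C D E⟩
    ⟨by linarith [angle_le_pi E' A' B'], angle_le_pi C' D' E'⟩
  have hε : ∠ D E A = ∠ D' E' A' :=
    Real.injOn_cos (angle_mem D E A) (angle_mem D' E' A') (by rw [hcos, hcos', hβ, hδ])
  exact ⟨by linarith, hβ, by linarith, hδ, hε⟩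
end

section
/- Let ABCDE be a strictly convex equilateral pentagon with unit side length whose interior angles satisfy 2β + γ = 2π and 2δ + α = 2π (type 7 conditions). Then the diagonal length dist(B, D) lies strictly between 1 and √3. -/
/-!
Put `g = π - β` and `a = π - δ`, so that `γ = 2g`, `α = 2a`, and `BD = 2 sin g` by the isosceles
triangle `BCD`. Relative to the first edge, the edges `AB, BC, CD, DE, EA` point in the directions
`0, g, π - g, π - g + a, 2a - π`, and closing up means
`cos (a - g) + cos 2a = 1` and `2 sin g = sin (a - g) + sin 2a`.

If `a ≤ g`, the second equation gives `2 sin g ≤ sin 2a < 2 sin a ≤ 2 sin g`, which is absurd. So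
`g < a`; then `cos (a - g) < 1` makes `cos 2a` positive, whence `g < a < π / 4` and `BD < √2`.
Finally `sin t + cos t > 1` for acute `t`; adding this for `t = a - g` and `t = 2a` gives
`2 sin g + 1 > 2`, i.e. `BD > 1`.
-/



open EuclideanGeometry

section Trigonometry

open Real

lemma cos_lt_one_of_pos_of_le_pi {x : ℝ} (hx₀ : 0 < x) (hx : x ≤ π) : cos x < 1 := by
  simpa using cos_lt_cos_of_nonneg_of_le_pi le_rfl hx hx₀

lemma one_lt_sin_add_cos {x : ℝ} (hx₀ : 0 < x) (hx : x < π / 2) : 1 < sin x + cos x := by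
  have hsin : 0 < sin x := sin_pos_of_pos_of_lt_pi hx₀ (by linarith)
  have hcos : 0 < cos x := cos_pos_of_mem_Ioo ⟨by linarith, hx⟩
  nlinarith [sin_sq_add_cos_sq x, mul_pos hsin hcos]

lemma one_lt_sin_add_sin_of_cos_add_cos_eq_one {x y : ℝ} (hx₀ : 0 < x) (hx : x < π / 2)
    (hy₀ : 0 < y) (hy : y < π / 2) (h : cos x + cos y = 1) : 1 < sin x + sin y := by
  linarith [one_lt_sin_add_cos hx₀ hx, one_lt_sin_add_cos hy₀ hy]

lemma lt_of_two_mul_sin_eq_sin_sub_add_sin_two_mul {g a : ℝ} (hg : g ≤ π / 2) (ha : 0 < a)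
    (h : 2 * sin g = sin (a - g) + sin (2 * a)) : g < a := by
  by_contra! hag
  have hsub : sin (a - g) ≤ 0 := sin_nonpos_of_nonpos_of_neg_pi_le (by linarith) (by linarith)
  have hle : sin a ≤ sin g := sin_le_sin_of_le_of_le_pi_div_two (by linarith) hg hag
  have hdouble : sin (2 * a) < 2 * sin a := by
    have hsin : 0 < sin a := sin_pos_of_pos_of_lt_pi ha (by linarith)
    rw [sin_two_mul]
    exact mul_lt_of_lt_one_right (by positivity) (cos_lt_one_of_pos_of_le_pi ha (by linarith))
  linarith

lemma lt_pi_div_four_of_cos_sub_add_cos_two_mul_eq_one {g a : ℝ} (hg : 0 ≤ g) (hga : g < a)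
    (ha : a ≤ π / 2) (h : cos (a - g) + cos (2 * a) = 1) : a < π / 4 := by
  by_contra! hle
  have hsub : cos (a - g) < 1 := cos_lt_one_of_pos_of_le_pi (by linarith) (by linarith)
  have hdouble : cos (2 * a) ≤ 0 :=
    cos_nonpos_of_pi_div_two_le_of_le (by linarith) (by linarith)
  linarith

theorem sin_bounds_of_closing_equations {g a : ℝ} (hg₀ : 0 < g) (hg : g < π / 2)
    (ha₀ : 0 < a) (ha : a < π / 2) (hcos : cos (a - g) + cos (2 * a) = 1)
    (hsin : 2 * sin g = sin (a - g) + sin (2 * a)) : 1 / 2 < sin g ∧ sin g < √2 / 2 := by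
  have hga : g < a := lt_of_two_mul_sin_eq_sin_sub_add_sin_two_mul hg.le ha₀ hsin
  have ha' : a < π / 4 := lt_pi_div_four_of_cos_sub_add_cos_two_mul_eq_one hg₀.le hga ha.le hcos
  constructor
  · have : 1 < sin (a - g) + sin (2 * a) :=
      one_lt_sin_add_sin_of_cos_add_cos_eq_one (by linarith) (by linarith) (by linarith)
        (by linarith) hcos
    linarith
  · rw [← sin_pi_div_four]
    exact sin_lt_sin_of_lt_of_le_pi_div_two (by linarith) (by linarith) (by linarith)

end Trigonometry

section Affine

open scoped Real

variable {V P : Type*} [NormedAddCommGroup V] [InnerProductSpace ℝ V] [MetricSpace P]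
  [NormedAddTorsor V P]

lemma dist_eq_two_mul_dist_mul_sin_half_angle {p q r : P} (h : dist p q = dist q r) :
    dist p r = 2 * dist p q * Real.sin (∠ p q r / 2) := by
  have hsin : 0 ≤ Real.sin (∠ p q r / 2) :=
    Real.sin_nonneg_of_nonneg_of_le_pi (by linarith [angle_nonneg p q r])
      (by linarith [angle_le_pi p q r, Real.pi_pos])
  rw [← sq_eq_sq₀ dist_nonneg (by positivity)]
  have hcos := Real.cos_two_mul' (∠ p q r / 2)
  have hlaw := dist_sq_eq_dist_sq_add_dist_sq_sub_two_mul_dist_mul_dist_mul_cos_angle p q r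
  rw [mul_div_cancel₀ _ two_ne_zero] at hcos
  rw [dist_comm r q, ← h, hcos] at hlaw
  linear_combination hlaw - 2 * dist p q ^ 2 * Real.sin_sq_add_cos_sq (∠ p q r / 2)

end Affine

section OrientedPlane

open Module
open scoped Real RealInnerProductSpace

variable {V : Type*} [NormedAddCommGroup V] [InnerProductSpace ℝ V] [Fact (finrank ℝ V = 2)]
  (o : Orientation ℝ V (Fin 2))

lemma areaForm_eq_norm_mul_norm_mul_sin_oangle (x y : V) :
    o.areaForm x y = ‖x‖ * ‖y‖ * (o.oangle x y).sin := by
  rw [Orientation.oangle, Real.Angle.sin_coe, ← o.norm_kahler, Complex.norm_mul_sin_arg]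
  simp [o.kahler_apply_apply]

lemma oangle_sign_eq_one_of_areaForm_pos {x y : V} (h : 0 < o.areaForm x y) :
    (o.oangle x y).sign = 1 := by
  rw [areaForm_eq_norm_mul_norm_mul_sin_oangle] at h
  exact sign_pos (pos_of_mul_pos_right h (by positivity))

lemma sum_norm_mul_cos_oangle_eq_zero {ι : Type*} {s : Finset ι} {v : ι → V}
    (hv : ∑ i ∈ s, v i = 0) {u : V} (hu : u ≠ 0) :
    ∑ i ∈ s, ‖v i‖ * (o.oangle u (v i)).cos = 0 := by
  have h : ‖u‖ * ∑ i ∈ s, ‖v i‖ * (o.oangle u (v i)).cos = ⟪u, ∑ i ∈ s, v i⟫ := by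
    rw [inner_sum]
    simp only [o.inner_eq_norm_mul_norm_mul_cos_oangle, Finset.mul_sum, mul_assoc]
  simpa [hv, hu] using h

lemma sum_norm_mul_sin_oangle_eq_zero {ι : Type*} {s : Finset ι} {v : ι → V}
    (hv : ∑ i ∈ s, v i = 0) {u : V} (hu : u ≠ 0) :
    ∑ i ∈ s, ‖v i‖ * (o.oangle u (v i)).sin = 0 := by
  have h : ‖u‖ * ∑ i ∈ s, ‖v i‖ * (o.oangle u (v i)).sin = o.areaForm u (∑ i ∈ s, v i) := by
    simp only [map_sum, areaForm_eq_norm_mul_norm_mul_sin_oangle, Finset.mul_sum, mul_assoc]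
  simpa [hv, hu] using h

theorem closing_equations_of_oangle_eq {u₁ u₂ u₃ u₄ u₅ : V} {ℓ g a : ℝ} (hℓ : ℓ ≠ 0)
    (hu₁ : ‖u₁‖ = ℓ) (hu₂ : ‖u₂‖ = ℓ) (hu₃ : ‖u₃‖ = ℓ) (hu₄ : ‖u₄‖ = ℓ) (hu₅ : ‖u₅‖ = ℓ)
    (hsum : u₁ + u₂ + u₃ + u₄ + u₅ = 0)
    (h₁₂ : o.oangle u₁ u₂ = g) (h₂₃ : o.oangle u₂ u₃ = (π - 2 * g : ℝ))
    (h₃₄ : o.oangle u₃ u₄ = a) (h₅₁ : o.oangle u₅ u₁ = (π - 2 * a : ℝ)) :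
    Real.cos (a - g) + Real.cos (2 * a) = 1 ∧
      2 * Real.sin g = Real.sin (a - g) + Real.sin (2 * a) := by
  have ne_zero {u : V} (hu : ‖u‖ = ℓ) : u ≠ 0 := norm_ne_zero_iff.mp (hu ▸ hℓ)
  have h₁₃ : o.oangle u₁ u₃ = (π - g : ℝ) := by
    rw [← o.oangle_add (ne_zero hu₁) (ne_zero hu₂) (ne_zero hu₃), h₁₂, h₂₃, ← Real.Angle.coe_add]
    ring_nf
  have h₁₄ : o.oangle u₁ u₄ = (π + (a - g) : ℝ) := by
    rw [← o.oangle_add (ne_zero hu₁) (ne_zero hu₃) (ne_zero hu₄), h₁₃, h₃₄, ← Real.Angle.coe_add]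
    ring_nf
  have h₁₅ : o.oangle u₁ u₅ = (2 * a - π : ℝ) := by
    rw [o.oangle_rev, h₅₁, ← Real.Angle.coe_neg, neg_sub]
  have hsum' : ∑ i, ![u₁, u₂, u₃, u₄, u₅] i = 0 := by simpa [Fin.sum_univ_five] using hsum
  have hcos := sum_norm_mul_cos_oangle_eq_zero o hsum' (ne_zero hu₁)
  have hsin := sum_norm_mul_sin_oangle_eq_zero o hsum' (ne_zero hu₁)
  simp only [Fin.sum_univ_five, Matrix.cons_val, hu₁, hu₂, hu₃, hu₄, hu₅, o.oangle_self, h₁₂, h₁₃,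
    h₁₄, h₁₅, Real.Angle.cos_zero, Real.Angle.sin_zero, Real.Angle.cos_coe, Real.Angle.sin_coe,
    Real.cos_pi_sub, Real.sin_pi_sub, Real.cos_sub_pi, Real.sin_sub_pi, add_comm π,
    Real.cos_add_pi, Real.sin_add_pi] at hcos hsin
  constructor <;> apply mul_left_cancel₀ hℓ <;> linarith

variable {P : Type*} [MetricSpace P] [NormedAddTorsor V P]

lemma oangle_vsub_vsub_eq_pi_sub_angle {p q r : P}
    (h : (o.oangle (q -ᵥ p) (r -ᵥ q)).sign = 1) :
    o.oangle (q -ᵥ p) (r -ᵥ q) = (π - ∠ p q r : ℝ) := by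
  rw [o.oangle_eq_angle_of_sign_eq_one h, EuclideanGeometry.angle, ← neg_vsub_eq_vsub_rev q p,
    InnerProductGeometry.angle_neg_left, sub_sub_cancel]

lemma angle_lt_pi_of_oangle_vsub_vsub_sign_eq_one {p q r : P}
    (h : (o.oangle (q -ᵥ p) (r -ᵥ q)).sign = 1) : ∠ p q r < π := by
  refine (angle_le_pi p q r).lt_of_ne fun hpi => ?_
  rw [oangle_vsub_vsub_eq_pi_sub_angle o h, hpi] at h
  simp at h

lemma oangle_neg_orientation_vsub_vsub (p q r : P) :
    (-o).oangle (q -ᵥ r) (p -ᵥ q) = o.oangle (q -ᵥ p) (r -ᵥ q) := by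
  rw [o.oangle_neg_orientation_eq_neg, ← o.oangle_rev, ← o.oangle_neg_neg, neg_vsub_eq_vsub_rev,
    neg_vsub_eq_vsub_rev]

theorem type7_diagonal_bounds_general {A B C D E : P}
    (hB : (o.oangle (B -ᵥ A) (C -ᵥ B)).sign = 1) (hC : (o.oangle (C -ᵥ B) (D -ᵥ C)).sign = 1)
    (hD : (o.oangle (D -ᵥ C) (E -ᵥ D)).sign = 1) (hA : (o.oangle (A -ᵥ E) (B -ᵥ A)).sign = 1)
    (hAB : dist A B = dist B C) (hBC : dist B C = dist C D) (hCD : dist C D = dist D E)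
    (hDE : dist D E = dist E A)
    (hβγ : 2 * ∠ A B C + ∠ B C D = 2 * π) (hδα : 2 * ∠ C D E + ∠ E A B = 2 * π) :
    dist A B < dist B D ∧ dist B D < √2 * dist A B := by
  have hpos : 0 < dist A B := dist_pos.mpr fun h => by simp [h] at hB
  have norm_edge {p q : P} (h : dist A B = dist p q) : ‖q -ᵥ p‖ = dist A B := by
    rw [h, dist_comm, dist_eq_norm_vsub V]
  have hsum : (B -ᵥ A) + (C -ᵥ B) + (D -ᵥ C) + (E -ᵥ D) + (A -ᵥ E) = (0 : V) := by
    rw [add_comm (B -ᵥ A), vsub_add_vsub_cancel, add_comm (C -ᵥ A), vsub_add_vsub_cancel,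
      add_comm (D -ᵥ A), vsub_add_vsub_cancel, vsub_add_vsub_cancel, vsub_self]
  have hγ : π - ∠ B C D = π - 2 * (π - ∠ A B C) := by linarith
  have hα : π - ∠ E A B = π - 2 * (π - ∠ C D E) := by linarith
  obtain ⟨hcos, hsin⟩ := closing_equations_of_oangle_eq o hpos.ne'
    (norm_edge rfl) (norm_edge hAB) (norm_edge (hAB.trans hBC))
    (norm_edge (hAB.trans (hBC.trans hCD))) (norm_edge (hAB.trans (hBC.trans (hCD.trans hDE))))
    hsum
    (oangle_vsub_vsub_eq_pi_sub_angle o hB) (hγ ▸ oangle_vsub_vsub_eq_pi_sub_angle o hC)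
    (oangle_vsub_vsub_eq_pi_sub_angle o hD) (hα ▸ oangle_vsub_vsub_eq_pi_sub_angle o hA)
  have hβ_lt := angle_lt_pi_of_oangle_vsub_vsub_sign_eq_one o hB
  have hγ_lt := angle_lt_pi_of_oangle_vsub_vsub_sign_eq_one o hC
  have hδ_lt := angle_lt_pi_of_oangle_vsub_vsub_sign_eq_one o hD
  have hα_lt := angle_lt_pi_of_oangle_vsub_vsub_sign_eq_one o hA
  obtain ⟨hlow, hupp⟩ := sin_bounds_of_closing_equations (by linarith) (by linarith)
    (by linarith) (by linarith) hcos hsin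
  have hBD : dist B D = 2 * dist A B * Real.sin (π - ∠ A B C) := by
    rw [dist_eq_two_mul_dist_mul_sin_half_angle hBC, hAB]
    congr 2
    linarith
  constructor <;> nlinarith

end OrientedPlane

section Coordinates

open scoped EuclideanSpace

/-- The orientation of the coordinate plane in which the standard basis is positively oriented. -/
noncomputable def planeOrientation : Orientation ℝ (EuclideanSpace ℝ (Fin 2)) (Fin 2) :=
  (EuclideanSpace.basisFun (Fin 2) ℝ).toBasis.orientation

lemma areaForm_planeOrientation (u v : EuclideanSpace ℝ (Fin 2)) :
    planeOrientation.areaForm u v = det2 u v := by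
  rw [planeOrientation, Orientation.areaForm_to_volumeForm,
    Orientation.volumeForm_robust _ (EuclideanSpace.basisFun (Fin 2) ℝ) rfl,
    Module.Basis.det_apply, Matrix.det_fin_two]
  simp [det2, Module.Basis.toMatrix_apply]
  ring

lemma SLeft.oangle_sign_eq_one {P Q R : EuclideanSpace ℝ (Fin 2)} (h : SLeft P Q R) :
    (planeOrientation.oangle (Q -ᵥ P) (R -ᵥ Q)).sign = 1 := by
  apply oangle_sign_eq_one_of_areaForm_pos
  have hdet : det2 (Q - P) (R - Q) = det2 (Q - P) (R - P) := by
    simp only [det2, PiLp.sub_apply]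
    ring
  rwa [areaForm_planeOrientation, vsub_eq_sub, vsub_eq_sub, hdet]

lemma ConvexPos5.exists_orientation {A B C D E : EuclideanSpace ℝ (Fin 2)}
    (h : ConvexPos5 A B C D E) :
    ∃ o : Orientation ℝ (EuclideanSpace ℝ (Fin 2)) (Fin 2),
      (o.oangle (B -ᵥ A) (C -ᵥ B)).sign = 1 ∧ (o.oangle (C -ᵥ B) (D -ᵥ C)).sign = 1 ∧
      (o.oangle (D -ᵥ C) (E -ᵥ D)).sign = 1 ∧ (o.oangle (A -ᵥ E) (B -ᵥ A)).sign = 1 := by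
  rcases h with ⟨hABC, -, -, hBCD, -, -, hCDE, -, -, -, -, -, hEAB, -, -⟩ |
    ⟨hEDC, -, -, hDCB, -, -, hCBA, -, -, hBAE, -, -, -, -, -⟩
  · exact ⟨planeOrientation, hABC.oangle_sign_eq_one, hBCD.oangle_sign_eq_one,
      hCDE.oangle_sign_eq_one, hEAB.oangle_sign_eq_one⟩
  · refine ⟨-planeOrientation, ?_, ?_, ?_, ?_⟩ <;> rw [oangle_neg_orientation_vsub_vsub]
    exacts [hCBA.oangle_sign_eq_one, hDCB.oangle_sign_eq_one, hEDC.oangle_sign_eq_one,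
      hBAE.oangle_sign_eq_one]

end Coordinates

theorem type7_diagonal_bounds
    (A B C D E : EuclideanSpace ℝ (Fin 2)) (α β γ δ ε : ℝ)
    (hconv : ConvexPos5 A B C D E) (hequi : Equilateral5 A B C D E)
    (hα : α = ∠ E A B) (hβ : β = ∠ A B C) (hγ : γ = ∠ B C D)
    (hδ : δ = ∠ C D E) (hε : ε = ∠ D E A)
    (hunit : dist A B = 1)
    (h1 : 2 * β + γ = 2 * Real.pi) (h2 : 2 * δ + α = 2 * Real.pi) :
    1 < dist B D ∧ dist B D < Real.sqrt 3 := by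
  subst hα hβ hγ hδ
  obtain ⟨o, hB, hC, hD, hA⟩ := hconv.exists_orientation
  obtain ⟨hAB, hBC, hCD, hDE⟩ := hequi
  open EuclideanSpace in
  obtain ⟨hlow, hupp⟩ :=
    type7_diagonal_bounds_general o hB hC hD hA hAB hBC hCD hDE h1 h2
  rw [hunit] at hlow hupp
  exact ⟨hlow, hupp.trans (by norm_num)⟩
end

section
/- Let ABCDE be a strictly convex equilateral pentagon whose interior angles satisfy 2β + γ = 2π and 2δ + α = 2π (type 7 conditions). Then the diagonal BD is perpendicular to the side AB, and the diagonal BD is not perpendicular to the side DE unless δ + γ/2 = π. -/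
/-!
Since `BC = CD`, the base angles of the triangle `BCD` are `∠ CBD = ∠ CDB = (π - ∠ BCD) / 2`. By
convexity the diagonal `BD` splits the interior angles at `B` and at `D`, so
`∠ ABC + ∠ BCD / 2 = π / 2 + ∠ DBA`; reversing the order of the vertices gives
`∠ CDE + ∠ BCD / 2 = π / 2 + ∠ BDE`. Perpendicularity at `B` and at `D` is therefore equivalent to
the corresponding left-hand side being `π`.
-/

open EuclideanGeometry

section IsoscelesTriangle

variable {V P : Type*} [NormedAddCommGroup V] [InnerProductSpace ℝ V] [MetricSpace P]
  [NormedAddTorsor V P]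

lemma two_mul_angle_add_angle_eq_pi_of_dist_eq {X Y Z : P} (hne : X ≠ Y)
    (hdist : dist X Y = dist Y Z) : 2 * ∠ Z X Y + ∠ X Y Z = Real.pi := by
  have hbase : ∠ Y X Z = ∠ Y Z X := angle_eq_angle_of_dist_eq (by rwa [dist_comm Y X])
  have hsum : ∠ X Y Z + ∠ Y Z X + ∠ Z X Y = Real.pi := angle_add_angle_add_angle_eq_pi Z hne.symm
  rw [angle_comm Y X Z] at hbase
  linarith

end IsoscelesTriangle

section SignedArea

variable {P Q R X Y Z : EuclideanSpace ℝ (Fin 2)}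

lemma det2_smul_eq_add (u v w : EuclideanSpace ℝ (Fin 2)) :
    det2 u w • v = det2 v w • u + det2 u v • w := by
  ext i
  fin_cases i <;> simp [det2] <;> ring

lemma det2_sub_sub_rotate (P Q R : EuclideanSpace ℝ (Fin 2)) :
    det2 (R - Q) (P - Q) = det2 (Q - P) (R - P) := by
  simp only [det2, PiLp.sub_apply]
  ring

namespace SLeft

lemma rotate_s11 (h : SLeft P Q R) : SLeft Q R P :=
  h.trans_eq (det2_sub_sub_rotate P Q R).symm

lemma ne₁₂ (h : SLeft P Q R) : P ≠ Q := by
  rintro rfl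
  simp [SLeft, det2] at h

lemma angle_eq_angle_add_angle (hXY : SLeft P X Y) (hYZ : SLeft P Y Z) (hXZ : SLeft P X Z) :
    ∠ X P Z = ∠ X P Y + ∠ Y P Z := by
  -- Cramer's rule gives the coordinates of `Y - P` in the basis `X - P`, `Z - P`.
  set a := det2 (Y - P) (Z - P) / det2 (X - P) (Z - P) with ha
  set b := det2 (X - P) (Y - P) / det2 (X - P) (Z - P) with hb
  have ha_nonneg : 0 ≤ a := (div_pos hYZ hXZ).le
  have hb_nonneg : 0 ≤ b := (div_pos hXY hXZ).le
  have hcomb : a • (X - P) + b • (Z - P) = Y - P := by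
    rw [ha, hb, div_eq_inv_mul, div_eq_inv_mul, mul_smul, mul_smul, ← smul_add,
      ← det2_smul_eq_add]
    exact inv_smul_smul₀ hXZ.ne' _
  exact InnerProductGeometry.angle_eq_angle_add_add_angle_add_of_mem_span
    (sub_ne_zero.mpr hYZ.ne₁₂.symm)
    (Submodule.mem_span_pair.mpr ⟨⟨a, ha_nonneg⟩, ⟨b, hb_nonneg⟩, hcomb⟩)

end SLeft

end SignedArea

namespace ConvexPos5

variable {A B C D E : EuclideanSpace ℝ (Fin 2)}

lemma reverse (h : ConvexPos5 A B C D E) : ConvexPos5 E D C B A :=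
  Or.symm h

lemma ne₂₃ (h : ConvexPos5 A B C D E) : B ≠ C := by
  rcases h with ⟨-, -, -, hBCD, -⟩ | ⟨-, -, -, -, -, -, -, -, hCBD, -⟩
  · exact hBCD.ne₁₂
  · exact hCBD.ne₁₂.symm

lemma angle_eq_angle_add_angle (h : ConvexPos5 A B C D E) : ∠ A B C = ∠ D B A + ∠ C B D := by
  rcases h with ⟨hABC, hABD, -, hBCD, -⟩ | ⟨-, -, -, -, -, -, -, -, hCBD, -, hBAD, hBAC, -⟩
  · rw [angle_comm A B C, add_comm]
    exact hBCD.angle_eq_angle_add_angle hABD.rotate_s11 hABC.rotate_s11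
  · rw [angle_comm D B A, angle_comm C B D]
    exact hBAD.angle_eq_angle_add_angle hCBD.rotate_s11 hBAC

lemma angle_add_half_angle_eq (h : ConvexPos5 A B C D E) (hdist : dist B C = dist C D) :
    ∠ A B C + ∠ B C D / 2 = Real.pi / 2 + ∠ D B A := by
  have hsplit : ∠ A B C = ∠ D B A + ∠ C B D := h.angle_eq_angle_add_angle
  have hbase : 2 * ∠ D B C + ∠ B C D = Real.pi :=
    two_mul_angle_add_angle_eq_pi_of_dist_eq h.ne₂₃ hdist
  rw [angle_comm D B C] at hbase
  linarith

end ConvexPos5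

theorem type7_perpendicular_diagonal_general {A B C D E : EuclideanSpace ℝ (Fin 2)}
    (hconv : ConvexPos5 A B C D E) (hdist : dist B C = dist C D) :
    (∠ D B A = Real.pi / 2 ↔ 2 * ∠ A B C + ∠ B C D = 2 * Real.pi) ∧
      (∠ B D E = Real.pi / 2 ↔ ∠ C D E + ∠ B C D / 2 = Real.pi) := by
  have hB : ∠ A B C + ∠ B C D / 2 = Real.pi / 2 + ∠ D B A := hconv.angle_add_half_angle_eq hdist
  have hD : ∠ E D C + ∠ D C B / 2 = Real.pi / 2 + ∠ B D E :=
    hconv.reverse.angle_add_half_angle_eq (by rw [dist_comm D C, dist_comm C B, hdist])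
  rw [angle_comm E D C, angle_comm D C B] at hD
  constructor <;> constructor <;> intro h <;> linarith

theorem type7_perpendicular_diagonal
    (A B C D E : EuclideanSpace ℝ (Fin 2)) (α β γ δ ε : ℝ)
    (hconv : ConvexPos5 A B C D E) (hequi : Equilateral5 A B C D E)
    (hα : α = ∠ E A B) (hβ : β = ∠ A B C) (hγ : γ = ∠ B C D)
    (hδ : δ = ∠ C D E) (hε : ε = ∠ D E A)
    (h1 : 2 * β + γ = 2 * Real.pi) (h2 : 2 * δ + α = 2 * Real.pi) :
    ∠ D B A = Real.pi / 2 ∧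
      (∠ B D E = Real.pi / 2 → δ + γ / 2 = Real.pi) := by
  subst hβ hγ hδ
  obtain ⟨hB, hD⟩ := type7_perpendicular_diagonal_general hconv hequi.2.1
  exact ⟨hB.mpr h1, hD.mp⟩
end

section
/- Let ABCDE be a strictly convex equilateral pentagon whose interior angles satisfy 2α + β = 2π and 2δ + γ = 2π (type 8 conditions). Then two of its interior angles sum to π, namely β + ε = π, and moreover β ≠ ε. -/
/-!
Read the edges as complex numbers. In a counterclockwise equilateral pentagon consecutive edges
differ by minus a rotation through the interior angle, and the conditions `2α + β = 2π`,
`2δ + γ = 2π` turn the edges `AB`, `BC`, `CD`, `DE`, `EA` into `-z²`, `1`, `-w²`, `w`, `z` times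
`BC`, where `z = e^{-iα}` and `w = e^{iδ}`. The pentagon closes up, so `z - z² + w - w² + 1 = 0`.
Subtracting this equation from `(zw)²` times its complex conjugate leaves
`(zw - 1)(z + 1)(w + 1) = 0`, and `α, δ < π`, so `zw = 1`, that is `α = δ`. The directions of `DE`
and `EA` now give `ε = 2α - π = π - β`, while the closing equation becomes
`4 cos² α - 2 cos α - 3 = 0`, which excludes `α = 3π/4` and with it `β = ε = π/2`.

A clockwise pentagon becomes counterclockwise under the relabelling `A ↔ D`, `B ↔ C`, which
preserves the angle conditions.
-/

open EuclideanGeometry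

section

open Complex
open scoped Real ComplexConjugate

lemma injOn_exp_ofReal_mul_I :
    Set.InjOn (fun θ : ℝ ↦ exp (θ * I)) (Set.Ioc (-π) π) := by
  intro x hx y hy hxy
  have hmul : (x : ℂ) * I = y * I :=
    exp_inj_of_neg_pi_lt_of_le_pi (by simpa using hx.1) (by simpa using hx.2)
      (by simpa using hy.1) (by simpa using hy.2) hxy
  exact_mod_cast mul_right_cancel₀ I_ne_zero hmul

lemma exp_ofReal_mul_I_ne_neg_one {θ : ℝ} (hθ : θ ∈ Set.Ioo (-π) π) : exp (θ * I) ≠ -1 := by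
  rw [← exp_pi_mul_I]
  exact fun h ↦ hθ.2.ne (injOn_exp_ofReal_mul_I ⟨hθ.1, hθ.2.le⟩
    ⟨by linarith [Real.pi_pos], le_rfl⟩ h)

lemma exp_mul_I_eq_exp_neg_mul_I_sq_of_two_mul_add_eq {x y : ℂ} (h : 2 * x + y = 2 * π) :
    exp (y * I) = exp (-x * I) ^ 2 := by
  calc exp (y * I) = exp ((2 : ℕ) * (-x * I) + 2 * π * I) := by
        congr 1
        push_cast
        linear_combination I * h
    _ = exp (-x * I) ^ 2 := by rw [exp_add, exp_two_pi_mul_I, mul_one, exp_nat_mul]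

lemma eq_exp_angle_mul_of_norm_eq_of_im_div_nonneg {u v : ℂ} (hnorm : ‖u‖ = ‖v‖)
    (him : 0 ≤ (u / v).im) : u = exp (InnerProductGeometry.angle u v * I) * v := by
  rcases eq_or_ne v 0 with rfl | hv
  · simpa using hnorm
  have hu : u ≠ 0 := by rwa [← norm_ne_zero_iff, hnorm, norm_ne_zero_iff]
  have hangle : InnerProductGeometry.angle u v = (u / v).arg := by
    rw [angle_eq_abs_arg hu hv, abs_of_nonneg (arg_nonneg_iff.2 him)]
  have hpolar : exp ((u / v).arg * I) = u / v := by
    simpa [hnorm, hv] using norm_mul_exp_arg_mul_I (u / v)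
  rw [hangle, hpolar, div_mul_cancel₀ u hv]

lemma angle_exp_mul_self {θ : ℝ} (hθ : θ ∈ Set.Icc 0 π) {v : ℂ} (hv : v ≠ 0) :
    InnerProductGeometry.angle (exp (θ * I) * v) v = θ := by
  have hmod : toIocMod Real.two_pi_pos (-π) θ = θ :=
    (toIocMod_eq_self _).2 ⟨by linarith [hθ.1, Real.pi_pos], by linarith [hθ.2]⟩
  calc InnerProductGeometry.angle (exp (θ * I) * v) v
    _ = InnerProductGeometry.angle (exp (θ * I) * v) (1 * v) := by rw [one_mul]
    _ = InnerProductGeometry.angle (exp (θ * I)) 1 := angle_mul_right hv _ _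
    _ = θ := by rw [angle_exp_one, hmod, abs_of_nonneg hθ.1]

lemma mul_eq_one_of_sub_sq_add_sub_sq_add_one_eq_zero {z w : ℂ} (hz : ‖z‖ = 1) (hw : ‖w‖ = 1)
    (hz' : z ≠ -1) (hw' : w ≠ -1) (h : z - z ^ 2 + (w - w ^ 2) + 1 = 0) : z * w = 1 := by
  have hzz : z * conj z = 1 := by simp [mul_conj, normSq_eq_norm_sq, hz]
  have hww : w * conj w = 1 := by simp [mul_conj, normSq_eq_norm_sq, hw]
  have hconj : conj z - conj z ^ 2 + (conj w - conj w ^ 2) + 1 = 0 := by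
    simpa using congrArg conj h
  have hrecip : w ^ 2 * (z - 1) + z ^ 2 * (w - 1) + z ^ 2 * w ^ 2 = 0 := by
    linear_combination z ^ 2 * w ^ 2 * hconj - w ^ 2 * (z - (z * conj z + 1)) * hzz
      - z ^ 2 * (w - (w * conj w + 1)) * hww
  have hfactor : (z * w - 1) * ((z + 1) * (w + 1)) = 0 := by
    linear_combination hrecip - h
  have hne : (z + 1) * (w + 1) ≠ 0 :=
    mul_ne_zero (mt eq_neg_of_add_eq_zero_left hz') (mt eq_neg_of_add_eq_zero_left hw')
  exact sub_eq_zero.1 ((mul_eq_zero.1 hfactor).resolve_right hne)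

/-- The displacement from `P` to `Q` as a complex number, so that turning by an angle is
multiplication by a unit. -/
noncomputable def edge (P Q : EuclideanSpace ℝ (Fin 2)) : ℂ :=
  orthonormalBasisOneI.repr.symm (Q - P)

variable {A B C D E P Q R : EuclideanSpace ℝ (Fin 2)}

lemma edge_add_edge (P Q R : EuclideanSpace ℝ (Fin 2)) : edge P Q + edge Q R = edge P R := by
  simp only [edge, ← map_add, add_comm (Q - P), sub_add_sub_cancel]

lemma edge_self (P : EuclideanSpace ℝ (Fin 2)) : edge P P = 0 := by
  rw [edge, sub_self, map_zero]

lemma neg_edge (P Q : EuclideanSpace ℝ (Fin 2)) : -edge P Q = edge Q P := by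
  simp only [edge, ← map_neg, neg_sub]

lemma norm_edge (P Q : EuclideanSpace ℝ (Fin 2)) : ‖edge P Q‖ = dist P Q := by
  rw [edge, LinearIsometryEquiv.norm_map, dist_comm, dist_eq_norm]

lemma angle_edge (P Q R : EuclideanSpace ℝ (Fin 2)) :
    InnerProductGeometry.angle (edge Q P) (edge Q R) = ∠ P Q R :=
  orthonormalBasisOneI.repr.symm.toLinearIsometry.angle_map _ _

lemma det2_eq_im_conj_edge_mul_edge (P Q R : EuclideanSpace ℝ (Fin 2)) :
    det2 (Q - P) (R - P) = (conj (edge Q R) * edge Q P).im := by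
  simp only [det2, edge, orthonormalBasisOneI_repr_symm_apply, PiLp.sub_apply, map_add, map_mul,
    conj_ofReal, conj_I, add_re, add_im, mul_re, mul_im, neg_re, neg_im, ofReal_re, ofReal_im,
    I_re, I_im]
  ring

namespace SLeft

lemma im_conj_edge_mul_edge_pos (h : SLeft P Q R) :
    0 < (conj (edge Q R) * edge Q P).im := by
  rwa [← det2_eq_im_conj_edge_mul_edge]

lemma edge_ne_zero (h : SLeft P Q R) : edge Q R ≠ 0 := by
  intro h0
  simpa [h0] using h.im_conj_edge_mul_edge_pos

lemma im_edge_div_edge_pos (h : SLeft P Q R) : 0 < (edge Q P / edge Q R).im := by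
  have hdiv : edge Q P / edge Q R = conj (edge Q R) * edge Q P / normSq (edge Q R) := by
    rw [div_eq_mul_inv, inv_def, ofReal_inv]
    ring
  rw [hdiv, div_ofReal_im]
  exact div_pos h.im_conj_edge_mul_edge_pos (normSq_pos.2 h.edge_ne_zero)

lemma angle_lt_pi (h : SLeft P Q R) : ∠ P Q R < π := by
  have him := h.im_edge_div_edge_pos
  have hQP : edge Q P ≠ 0 := fun h0 ↦ by simp [h0] at him
  rw [← angle_edge, angle_eq_abs_arg hQP h.edge_ne_zero, abs_of_nonneg (arg_nonneg_iff.2 him.le)]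
  exact arg_lt_pi_iff.2 (Or.inr him.ne')

lemma edge_eq_neg_exp_angle_mul (h : SLeft P Q R) (hdist : dist P Q = dist Q R) :
    edge P Q = -(exp (∠ P Q R * I) * edge Q R) := by
  have hnorm : ‖edge Q P‖ = ‖edge Q R‖ := by rw [norm_edge, norm_edge, dist_comm, hdist]
  rw [← neg_edge, ← angle_edge,
    ← eq_exp_angle_mul_of_norm_eq_of_im_div_nonneg hnorm h.im_edge_div_edge_pos.le]

end SLeft

lemma Equilateral5.reflect (h : Equilateral5 A B C D E) : Equilateral5 D C B A E := by
  obtain ⟨hAB, hBC, hCD, hDE⟩ := h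
  rw [dist_comm C D] at hBC hCD
  rw [dist_comm B C] at hAB hBC
  rw [dist_comm A B] at hAB
  rw [dist_comm D E] at hCD hDE
  rw [dist_comm E A] at hDE
  exact ⟨hBC.symm, hAB.symm, by rw [hAB, hBC, hCD, hDE], hDE.symm⟩

/-- An equilateral pentagon satisfying the type 8 angle conditions, traversed counterclockwise.
Convexity is encoded by left turns at the four vertices that enter the angle conditions. -/
structure CcwType8 (A B C D E : EuclideanSpace ℝ (Fin 2)) : Prop where
  left_A : SLeft E A B
  left_B : SLeft A B C
  left_C : SLeft B C D
  left_D : SLeft C D E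
  equilateral : Equilateral5 A B C D E
  two_mul_angle_A_add_angle_B : 2 * ∠ E A B + ∠ A B C = 2 * π
  two_mul_angle_D_add_angle_C : 2 * ∠ C D E + ∠ B C D = 2 * π

namespace CcwType8

lemma edge_AB (h : CcwType8 A B C D E) :
    edge A B = -(exp (-∠ E A B * I) ^ 2 * edge B C) := by
  rw [← exp_mul_I_eq_exp_neg_mul_I_sq_of_two_mul_add_eq (y := ∠ A B C)
    (mod_cast h.two_mul_angle_A_add_angle_B)]
  exact h.left_B.edge_eq_neg_exp_angle_mul h.equilateral.1

lemma edge_EA (h : CcwType8 A B C D E) : edge E A = exp (-∠ E A B * I) * edge B C := by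
  obtain ⟨hAB, hBC, hCD, hDE⟩ := h.equilateral
  have hEA : dist E A = dist A B := by rw [hAB, hBC, hCD, hDE]
  rw [h.left_A.edge_eq_neg_exp_angle_mul hEA, h.edge_AB, neg_mul, exp_neg]
  field_simp

lemma edge_CD (h : CcwType8 A B C D E) :
    edge C D = -(exp (∠ C D E * I) ^ 2 * edge B C) := by
  rw [h.left_C.edge_eq_neg_exp_angle_mul h.equilateral.2.1,
    exp_mul_I_eq_exp_neg_mul_I_sq_of_two_mul_add_eq (x := ∠ C D E) (y := ∠ B C D)
      (mod_cast h.two_mul_angle_D_add_angle_C), neg_mul, exp_neg]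
  field_simp

lemma edge_DE (h : CcwType8 A B C D E) : edge D E = exp (∠ C D E * I) * edge B C := by
  have hCD := h.left_D.edge_eq_neg_exp_angle_mul h.equilateral.2.2.1
  rw [h.edge_CD] at hCD
  apply mul_left_cancel₀ (exp_ne_zero (∠ C D E * I))
  linear_combination hCD

lemma closing_equation (h : CcwType8 A B C D E) :
    exp (-∠ E A B * I) - exp (-∠ E A B * I) ^ 2 +
      (exp (∠ C D E * I) - exp (∠ C D E * I) ^ 2) + 1 = 0 := by
  have hsum : edge A B + edge B C + edge C D + edge D E + edge E A = 0 := by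
    simp only [edge_add_edge, edge_self]
  rw [h.edge_AB, h.edge_CD, h.edge_DE, h.edge_EA] at hsum
  apply mul_right_cancel₀ h.left_B.edge_ne_zero
  linear_combination hsum

lemma angle_A_eq_angle_D (h : CcwType8 A B C D E) : ∠ E A B = ∠ C D E := by
  have hA := h.left_A.angle_lt_pi
  have hD := h.left_D.angle_lt_pi
  have hA₀ : 0 ≤ ∠ E A B := InnerProductGeometry.angle_nonneg _ _
  have hD₀ : 0 ≤ ∠ C D E := InnerProductGeometry.angle_nonneg _ _
  have hprod : exp ((-∠ E A B : ℝ) * I) * exp (∠ C D E * I) = 1 := by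
    refine mul_eq_one_of_sub_sq_add_sub_sq_add_one_eq_zero (norm_exp_ofReal_mul_I _)
      (norm_exp_ofReal_mul_I _) ?_ ?_ (mod_cast h.closing_equation)
    · exact exp_ofReal_mul_I_ne_neg_one (by constructor <;> linarith)
    · exact exp_ofReal_mul_I_ne_neg_one (by constructor <;> linarith)
  have hsub : exp ((∠ C D E - ∠ E A B : ℝ) * I) = exp ((0 : ℝ) * I) := by
    rw [ofReal_zero, zero_mul, exp_zero, ← hprod, ← exp_add]
    push_cast
    ring_nf
  linarith [injOn_exp_ofReal_mul_I (by constructor <;> linarith)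
    (by constructor <;> linarith) hsub]

lemma quadratic_cos_angle_A (h : CcwType8 A B C D E) :
    4 * Real.cos (∠ E A B) ^ 2 - 2 * Real.cos (∠ E A B) - 3 = 0 := by
  have hclosing := h.closing_equation
  rw [← h.angle_A_eq_angle_D] at hclosing
  have hcos := two_cos (∠ E A B)
  have hmul : exp (-∠ E A B * I) * exp (∠ E A B * I) = 1 := by
    rw [← exp_add, neg_mul, neg_add_cancel, exp_zero]
  suffices hℂ : 4 * cos (∠ E A B) ^ 2 - 2 * cos (∠ E A B) - 3 = 0 by exact_mod_cast hℂ
  linear_combination (2 * cos (∠ E A B) + exp (∠ E A B * I) + exp (-∠ E A B * I) - 1) * hcos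
    - hclosing + 2 * hmul

lemma angle_B_add_angle_E (h : CcwType8 A B C D E) : ∠ A B C + ∠ D E A = π := by
  have hB : π - ∠ A B C ∈ Set.Icc 0 π :=
    ⟨sub_nonneg.2 (InnerProductGeometry.angle_le_pi _ _),
      sub_le_self _ (InnerProductGeometry.angle_nonneg _ _)⟩
  have hEA : edge E A ≠ 0 := by
    rw [h.edge_EA]
    exact mul_ne_zero (exp_ne_zero _) h.left_B.edge_ne_zero
  have hED : edge E D = exp ((π - ∠ A B C : ℝ) * I) * edge E A := by
    have hA : π - ∠ A B C = 2 * ∠ E A B - π := by linarith [h.two_mul_angle_A_add_angle_B]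
    have hexp : exp ((2 * ∠ E A B - π) * I) * exp (-∠ E A B * I) = -exp (∠ E A B * I) := by
      calc exp ((2 * ∠ E A B - π) * I) * exp (-∠ E A B * I)
          = exp (-(π * I) + ∠ E A B * I) := by
            rw [← exp_add]
            ring_nf
        _ = -exp (∠ E A B * I) := by rw [exp_add, exp_neg_pi_mul_I, neg_one_mul]
    rw [hA, h.edge_EA, ← mul_assoc, ofReal_sub, ofReal_mul, ofReal_ofNat, hexp, ← neg_edge,
      h.edge_DE, ← h.angle_A_eq_angle_D, neg_mul]
  have hE : ∠ D E A = π - ∠ A B C := by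
    rw [← angle_edge, hED, angle_exp_mul_self hB hEA]
  rw [hE, add_sub_cancel]

lemma angle_B_eq_angle_C (h : CcwType8 A B C D E) : ∠ A B C = ∠ B C D := by
  linarith [h.two_mul_angle_A_add_angle_B, h.two_mul_angle_D_add_angle_C,
    h.angle_A_eq_angle_D]

lemma angle_B_ne_angle_E (h : CcwType8 A B C D E) : ∠ A B C ≠ ∠ D E A := by
  intro hBE
  have hA : 2 * ∠ E A B = 2 * π - π / 2 := by
    linarith [h.two_mul_angle_A_add_angle_B, h.angle_B_add_angle_E]
  have hcos : 2 * Real.cos (∠ E A B) ^ 2 - 1 = 0 := by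
    rw [← Real.cos_two_mul, hA, Real.cos_two_pi_sub, Real.cos_pi_div_two]
  have hhalf : Real.cos (∠ E A B) = -1 / 2 := by linarith [h.quadratic_cos_angle_A]
  norm_num [hhalf] at hcos

end CcwType8

end

theorem type8_beta_eps_sum_pi_and_ne
    (A B C D E : EuclideanSpace ℝ (Fin 2)) (α β γ δ ε : ℝ)
    (hconv : ConvexPos5 A B C D E) (hequi : Equilateral5 A B C D E)
    (hα : α = ∠ E A B) (hβ : β = ∠ A B C) (hγ : γ = ∠ B C D)
    (hδ : δ = ∠ C D E) (hε : ε = ∠ D E A)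
    (h1 : 2 * α + β = 2 * Real.pi) (h2 : 2 * δ + γ = 2 * Real.pi) :
    β + ε = Real.pi ∧ β ≠ ε := by
  subst hα hβ hγ hδ hε
  rcases hconv with ⟨hB, -, -, hC, -, -, hD, -, -, -, -, -, hA, -, -⟩ |
    ⟨hD, -, -, hC, -, -, hB, -, -, hA, -, -, -, -, -⟩
  · have h : CcwType8 A B C D E := ⟨hA, hB, hC, hD, hequi, h1, h2⟩
    exact ⟨h.angle_B_add_angle_E, h.angle_B_ne_angle_E⟩
  · have h : CcwType8 D C B A E := by
      refine ⟨hD, hC, hB, hA, hequi.reflect, ?_, ?_⟩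
      · rwa [angle_comm E D C, angle_comm D C B]
      · rwa [angle_comm B A E, angle_comm C B A]
    rw [angle_comm A B C, angle_comm D E A, ← h.angle_B_eq_angle_C]
    exact ⟨h.angle_B_add_angle_E, h.angle_B_ne_angle_E⟩
end
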